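/- arXiv:2506.02988 — 9 statements merged into one kernel-verified Lean document; each statement's English description precedes it below -/
import Mathlib

section
/- Let w > 0 and δ = w/(w+1), let p and q be coprime integers with q ≥ 1, and let j be an integer with 1 ≤ j ≤ ⌈δq⌉ − 1. Then there is a unique b ∈ (0,1) satisfying (1−b)^j (1+wb)^{q−j} = 1, and for this b there exists ω ∈ ℝ such that the q-th iterate of the lift f_{b,ω,φ_w}(x) = x + ω + b·φ_w(x) equals the translation R_p : x ↦ x + p. In particular, for each such j the p/q-Arnol'd tongue of the family pinches to a single point at coupling value b. -/
/-- The 1-periodic piecewise linear forcing with `φ_w(0) = 0`, slope `-1` on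
`[0, δ]` and slope `w` on `[δ, 1]`, where `δ = w/(w+1)`. -/
noncomputable def phiW (w : ℝ) (x : ℝ) : ℝ :=
  if Int.fract x ≤ w / (w + 1) then -(Int.fract x)
  else -(w / (w + 1)) + w * (Int.fract x - w / (w + 1))

lemma aux_prod_range (q : ℕ) [NeZero q] (s : ZMod q → ℝ) :
    ∏ m ∈ Finset.range q, s (m : ZMod q) = ∏ i, s i := by
  obtain ⟨n, rfl⟩ : ∃ n, q = n + 1 := ⟨q - 1, by have := NeZero.pos q; omega⟩
  rw [Finset.prod_range]
  refine Finset.prod_congr rfl fun i _ => ?_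
  congr 1
  exact ZMod.natCast_zmod_val (n := n+1) i

lemma aux_cocycle_one (q : ℕ) [NeZero q] (s : ZMod q → ℝ) (hs : ∀ i, 0 < s i)
    (hp : ∏ i, s i = 1) : ∃ l : ZMod q → ℝ, (∀ i, 0 < l i) ∧ ∀ i, l (i + 1) = s i * l i := by
  refine ⟨fun k => ∏ m ∈ Finset.range k.val, s (m : ZMod q),
    fun i => Finset.prod_pos fun _ _ => hs _, fun i => ?_⟩
  have hlt := ZMod.val_lt i
  have key : s i * ∏ m ∈ Finset.range i.val, s (m : ZMod q)
      = ∏ m ∈ Finset.range (i.val + 1), s (m : ZMod q) := by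
    rw [Finset.prod_range_succ, ZMod.natCast_zmod_val, mul_comm]
  have hv : (i + 1).val = (i.val + 1) % q := by
    conv_lhs => rw [← ZMod.natCast_zmod_val i]
    rw [← Nat.cast_succ, ZMod.val_natCast]
  show ∏ m ∈ Finset.range (i+1).val, s (m : ZMod q) = _
  rw [key, hv]
  rcases Nat.lt_or_ge (i.val + 1) q with h | h
  · rw [Nat.mod_eq_of_lt h]
  · have : i.val + 1 = q := by omega
    rw [this, Nat.mod_self, aux_prod_range, hp]; simp

lemma aux_cocycle (q : ℕ) [NeZero q] (a : ZMod q) (ha : IsUnit a) (s : ZMod q → ℝ)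
    (hs : ∀ i, 0 < s i) (hp : ∏ i, s i = 1) :
    ∃ l : ZMod q → ℝ, (∀ i, 0 < l i) ∧ ∀ i, l (i + a) = s i * l i := by
  obtain ⟨u, rfl⟩ := ha
  obtain ⟨l, hl, h⟩ := aux_cocycle_one q (fun k => s (u * k)) (fun _ => hs _) (by
    rw [← hp]
    exact Fintype.prod_equiv (Units.mulLeft u) _ _ (fun _ => rfl))
  refine ⟨fun i => l (↑u⁻¹ * i), fun _ => hl _, fun i => ?_⟩
  have := h (↑u⁻¹ * i)
  simp only [Units.mul_inv_cancel_left] at this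
  show l (↑u⁻¹ * (i + u)) = _
  rw [mul_add, Units.inv_mul, this]

lemma aux_prim (l : ℤ → ℝ) : ∃ X : ℤ → ℝ, X 0 = 0 ∧ ∀ i, X (i + 1) = X i + l i := by
  refine ⟨fun i => ∑ k ∈ Finset.Ico 0 i, l k - ∑ k ∈ Finset.Ico i 0, l k, by simp, fun i => ?_⟩
  rcases lt_or_ge i 0 with h | h
  · have e : Finset.Ico i 0 = insert i (Finset.Ico (i+1) 0) := by
      ext; simp; omega
    have e1 : Finset.Ico 0 i = ∅ := by ext; simp; omega
    have e2 : Finset.Ico 0 (i+1) = ∅ := by ext; simp; omega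
    simp only [e, e1, e2]
    rw [Finset.sum_insert (by simp)]; simp
  · have e : Finset.Ico 0 (i+1) = insert i (Finset.Ico 0 i) := by
      ext; simp; omega
    have e1 : Finset.Ico i 0 = ∅ := by ext; simp; omega
    have e2 : Finset.Ico (i+1) 0 = ∅ := by ext; simp; omega
    simp only [e, e1, e2]
    rw [Finset.sum_insert (by simp)]; simp; ring

lemma aux_exists (w : ℝ) (hw : 0 < w) (q j : ℕ) (hj1 : 1 ≤ j) (hjq : j < q)
    (hlt : (j : ℝ) < w / (w + 1) * q) :
    ∃! b : ℝ, b ∈ Set.Ioo (0 : ℝ) 1 ∧ (1 - b) ^ j * (1 + w * b) ^ (q - j) = 1 := by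
  have hj0 : (1 : ℝ) ≤ j := by exact_mod_cast hj1
  obtain ⟨m, rfl⟩ : ∃ m, q = j + m := ⟨q - j, by omega⟩
  simp only [Nat.add_sub_cancel_left]
  have hN : (j : ℝ) < m * w := by
    rw [div_mul_eq_mul_div, lt_div_iff₀ (by linarith)] at hlt
    push_cast at hlt
    nlinarith
  have hm : m ≠ 0 := by omega
  have ex : ∃ b : ℝ, b ∈ Set.Ioo (0 : ℝ) 1 ∧ (1 - b) ^ j * (1 + w * b) ^ m = 1 := by
    set N : ℝ := m * w with hNd
    have hNp : 0 < N := by linarith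
    obtain ⟨b0, hb0, hb1⟩ : ∃ b0 : ℝ, 0 < b0 ∧ b0 * (2 * j * N) = N - j :=
      ⟨(N - j) / (2 * j * N), div_pos (by linarith) (by positivity), by field_simp⟩
    have hbj : b0 * j < 1 := by
      by_contra hc
      push Not at hc
      nlinarith
    have hb01 : b0 < 1 := by nlinarith
    have h1 : 1 - j * b0 ≤ (1 - b0) ^ j := by
      have := one_add_mul_le_pow (a := -b0) (by linarith) j
      rw [← sub_eq_add_neg] at this
      linarith
    have h2 : 1 + N * b0 ≤ (1 + w * b0) ^ m := by
      have := one_add_mul_le_pow (a := w * b0) (by have := mul_pos hw hb0; linarith) m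
      rw [hNd]; linarith
    have h3 : 1 < (1 - b0) ^ j * (1 + w * b0) ^ m := by
      have h4 : (1 - j * b0) * (1 + N * b0) ≤ (1 - b0) ^ j * (1 + w * b0) ^ m :=
        mul_le_mul h1 h2 (by positivity) (pow_nonneg (by linarith) _)
      refine lt_of_lt_of_le ?_ h4
      have : (1 - j * b0) * (1 + N * b0) = 1 + b0 * ((N - j) - b0 * (j * N)) := by ring
      rw [this]
      have : (N - j) - b0 * (j * N) = (N - j) / 2 := by linarith
      rw [this]
      have := mul_pos hb0 (half_pos (sub_pos.2 hN))
      linarith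
    have hc : ContinuousOn (fun b : ℝ => (1 - b) ^ j * (1 + w * b) ^ m) (Set.Icc b0 1) := by
      fun_prop
    have := intermediate_value_Ioo' hb01.le hc
    obtain ⟨b, hb, hb'⟩ := this (show (1 : ℝ) ∈ Set.Ioo _ _ from
      ⟨by simp [show j ≠ 0 by omega], h3⟩)
    exact ⟨b, ⟨hb0.trans hb.1, hb.2⟩, hb'⟩
  have uniq : ∀ b c : ℝ, 0 < b → b < c → c < 1 → (1 - c) ^ j * (1 + w * c) ^ m = 1 →
      1 < (1 - b) ^ j * (1 + w * b) ^ m := by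
    intro b c hb hbc hc hP
    have hc0 : 0 < c := hb.trans hbc
    have ht0 : 0 < b / c := by positivity
    have ht1 : b / c < 1 := by rw [div_lt_one hc0]; exact hbc
    have hbt : b / c * c = b := by field_simp
    have hwc : 0 < w * c := by positivity
    have hcc : 0 < 1 - c := by linarith
    have h1 : (1 - c) ^ (b / c) < 1 - b := by
      have := rpow_one_add_lt_one_add_mul_self (s := -c) (by linarith) (by linarith) ht0 ht1
      rw [← sub_eq_add_neg] at this
      linarith
    have h2 : (1 + w * c) ^ (b / c) < 1 + w * b := by
      have := rpow_one_add_lt_one_add_mul_self (s := w * c) (by linarith) hwc.ne' ht0 ht1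
      have e : b / c * (w * c) = w * b := by field_simp
      rwa [e] at this
    have e : ((1 - c) ^ (b / c)) ^ j * ((1 + w * c) ^ (b / c)) ^ m = 1 := by
      have hww : 0 ≤ 1 + w * c := by linarith
      rw [← Real.rpow_mul_natCast hcc.le, ← Real.rpow_mul_natCast hww, mul_comm _ (j:ℝ),
        mul_comm _ (m:ℝ), Real.rpow_natCast_mul hcc.le, Real.rpow_natCast_mul hww,
        ← Real.mul_rpow (by positivity) (by positivity), hP, Real.one_rpow]
    have p1 : 0 < (1 - c) ^ (b / c) := by positivity
    have p2 : 0 < (1 + w * c) ^ (b / c) := by positivity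
    refine e.symm.trans_lt ?_
    exact mul_lt_mul'' (pow_lt_pow_left₀ h1 p1.le (show j ≠ 0 by omega)) (pow_lt_pow_left₀ h2 p2.le hm)
      (by positivity) (by positivity)
  obtain ⟨b, hb, hP⟩ := ex
  refine ⟨b, ⟨hb, hP⟩, ?_⟩
  rintro c ⟨hc, hQ⟩
  rcases lt_trichotomy c b with h | h | h
  · exact absurd hQ (uniq c b hc.1 h hb.2 hP).ne'
  · exact h
  · exact absurd hP (uniq b c hb.1 h hc.2 hQ).ne'

lemma aux_lengths (w b : ℝ) (hw : 0 < w) (hb : b ∈ Set.Ioo (0:ℝ) 1) (p : ℤ) (q j : ℕ)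
    (hpq : Int.gcd p q = 1) (hjq : j < q)
    (hP : (1 - b) ^ j * (1 + w * b) ^ (q - j) = 1) :
    ∃ l X : ℤ → ℝ, (∀ i, 0 < l i) ∧ (∀ i, l (i + q) = l i) ∧
      (∀ i : ℕ, i < j → l (i + p) = (1 - b) * l i) ∧
      (∀ i : ℕ, j ≤ i → i < q → l (i + p) = (1 + w * b) * l i) ∧
      X 0 = 0 ∧ (∀ i, X (i + 1) = X i + l i) ∧ X q = 1 := by
  haveI : NeZero q := ⟨by omega⟩
  have hb0 := hb.1
  have hb1 := hb.2
  have hwb := mul_pos hw hb0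
  have hu : IsUnit ((p : ℤ) : ZMod q) := by
    have : IsCoprime p (q : ℤ) := Int.isCoprime_iff_gcd_eq_one.2 hpq
    obtain ⟨u, v, h⟩ := this
    have h' := congrArg (Int.cast : ℤ → ZMod q) h
    push_cast at h'
    simp only [ZMod.natCast_self, mul_zero, add_zero] at h'
    exact IsUnit.of_mul_eq_one _ (by rw [mul_comm]; exact h')
  let s : ZMod q → ℝ := fun i => if i.val < j then 1 - b else 1 + w * b
  have hs : ∀ i, 0 < s i := by
    intro i; simp only [s]; split_ifs <;> linarith
  have hprod : ∏ i, s i = 1 := by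
    rw [← aux_prod_range, ← hP]
    obtain ⟨m, rfl⟩ : ∃ m, q = j + m := ⟨q - j, by omega⟩
    rw [Finset.prod_range_add]
    congr 1
    · rw [Finset.prod_congr rfl (g := fun _ => 1 - b)]
      · simp
      · intro i hi
        have hi := Finset.mem_range.1 hi
        simp only [s]
        rw [ZMod.val_natCast, Nat.mod_eq_of_lt (by omega), if_pos hi]
    · rw [Finset.prod_congr rfl (g := fun _ => 1 + w * b)]
      · simp
      · intro i hi
        have hi := Finset.mem_range.1 hi
        simp only [s]
        rw [ZMod.val_natCast, Nat.mod_eq_of_lt (by omega), if_neg (by omega)]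
  obtain ⟨l, hl, hls⟩ := aux_cocycle q _ hu s hs hprod
  set T : ℝ := ∑ m ∈ Finset.range q, l (m : ZMod q) with hT
  have hTp : 0 < T := Finset.sum_pos (fun _ _ => hl _) ⟨0, by simp; omega⟩
  obtain ⟨X, hX0, hX⟩ := aux_prim (fun i => l (i : ZMod q) / T)
  refine ⟨fun i => l (i : ZMod q) / T, X, fun i => div_pos (hl _) hTp, ?_, ?_, ?_, hX0, hX, ?_⟩
  · intro i; simp
  · intro i hi
    have := hls (i : ZMod q)
    simp only [s] at this
    rw [ZMod.val_natCast, Nat.mod_eq_of_lt (by omega), if_pos hi] at this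
    push_cast
    rw [this]; ring
  · intro i hi hi'
    have := hls (i : ZMod q)
    simp only [s] at this
    rw [ZMod.val_natCast, Nat.mod_eq_of_lt (by omega), if_neg (by omega)] at this
    push_cast
    rw [this]; ring
  · have : ∀ n : ℕ, X n = (∑ m ∈ Finset.range n, l (m : ZMod q)) / T := by
      intro n
      induction n with
      | zero => simpa using hX0
      | succ k ih =>
        push_cast
        rw [hX, ih, Finset.sum_range_succ]; push_cast; ring
    rw [this, ← hT, div_self hTp.ne']

lemma aux_conj (w b : ℝ) (hw : 0 < w) (hb : b ∈ Set.Ioo (0:ℝ) 1) (p : ℤ) (q j : ℕ)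
    (hjq : j < q) (l X : ℤ → ℝ) (hl : ∀ i, 0 < l i) (hper : ∀ i, l (i + q) = l i)
    (h1 : ∀ i : ℕ, i < j → l (i + p) = (1 - b) * l i)
    (h2 : ∀ i : ℕ, j ≤ i → i < q → l (i + p) = (1 + w * b) * l i)
    (hX0 : X 0 = 0) (hX : ∀ i, X (i + 1) = X i + l i) (hXq : X q = 1) :
    (fun x => x + X p + b * phiW w x)^[q] = fun x => x + (p : ℝ) := by
  have hq0 : 0 < q := by omega
  have hmono : StrictMono X := strictMono_int_of_lt_succ fun i => by
    rw [hX]; linarith [hl i]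
  have hXs : ∀ i, X (i + q) = X i + 1 := by
    intro i
    induction i with
    | zero => simp [hX0, hXq]
    | succ i ih =>
      rw [add_right_comm, hX, ih, hX, hper]; ring
    | pred i ih =>
      have e1 := hX (-(i:ℤ) - 1)
      have e2 := hX (-(i:ℤ) - 1 + q)
      have e3 := hper (-(i:ℤ) - 1)
      rw [show -(i:ℤ) - 1 + q + 1 = -i + q by ring] at e2
      rw [show -(i:ℤ) - 1 + 1 = -i by ring] at e1
      linarith
  have hXm : ∀ m i : ℤ, X (i + m * q) = X i + m := by
    intro m i
    induction m with
    | zero => simp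
    | succ k ih =>
      rw [show i + ((k:ℤ) + 1) * q = i + k * q + q by ring, hXs, ih]; push_cast; ring
    | pred k ih =>
      have := hXs (i + (-(k:ℤ) - 1) * q)
      rw [show i + (-(k:ℤ) - 1) * q + q = i + -k * q by ring, ih] at this
      push_cast at this ⊢; linarith
  have hlm : ∀ m i : ℤ, l (i + m * q) = l i := by
    intro m i
    have a := hX (i + m * q)
    rw [add_right_comm, hXm, hXm, hX] at a
    linarith
  have A1 : ∀ r : ℕ, r ≤ j → X (r + p) = X p + (1 - b) * X r := by
    intro r
    induction r with
    | zero => simp [hX0]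
    | succ k ih =>
      intro hk
      push_cast
      rw [add_right_comm, hX, hX, ih (by omega), h1 k (by omega)]; ring
  have A2 : ∀ r : ℕ, j ≤ r → r ≤ q → X (r + p) = X (j + p) + (1 + w * b) * (X r - X j) := by
    intro r hr
    induction r, hr using Nat.le_induction with
    | base => simp
    | succ k hk ih =>
      intro hk'
      push_cast
      rw [add_right_comm, hX, hX, ih (by omega), h2 k hk (by omega)]; ring
  have hd : X j = w / (w + 1) := by
    have := A2 q hjq.le le_rfl
    rw [add_comm, hXs, A1 j le_rfl, hXq] at this
    have : b * (X j * (w + 1) - w) = 0 := by linarith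
    have := (mul_eq_zero.1 this).resolve_left hb.1.ne'
    rw [eq_div_iff (by linarith)]; linarith
  set F : ℝ → ℝ := fun x => x + X p + b * phiW w x with hF
  have step : ∀ (i : ℤ) (θ : ℝ), 0 ≤ θ → θ < 1 →
      F (X i + θ * l i) = X (i + p) + θ * l (i + p) := by
    intro i θ h0 hθ
    obtain ⟨m, r, hr, rfl⟩ : ∃ (m : ℤ) (r : ℕ), r < q ∧ i = r + m * q := by
      have hq' : (q : ℤ) ≠ 0 := by omega
      have a := Int.emod_nonneg i hq'
      have c := Int.emod_lt_of_pos i (show (0:ℤ) < q by omega)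
      refine ⟨i / q, (i % q).toNat, by omega, ?_⟩
      rw [Int.toNat_of_nonneg a, mul_comm]; exact (Int.emod_add_mul_ediv i q).symm
    rw [add_right_comm, hXm, hXm, hlm, hlm]
    have t0 : X r ≤ X r + θ * l r := by have := mul_nonneg h0 (hl r).le; linarith
    have t1 : X r + θ * l r < X (r + 1) := by rw [hX]; have := mul_lt_mul_of_pos_right hθ (hl r); linarith
    have r0 : 0 ≤ X r := by rw [← hX0]; exact hmono.monotone (by omega)
    have r1 : X (r + 1) ≤ 1 := by rw [← hXq]; exact hmono.monotone (by omega)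
    have hfr : Int.fract (X r + m + θ * l r) = X r + θ * l r := by
      rw [add_right_comm, Int.fract_add_intCast, Int.fract_eq_self]
      exact ⟨by linarith, by linarith⟩
    simp only [hF, phiW, hfr]
    rcases Nat.lt_or_ge r j with h | h
    · have : X (r + 1) ≤ X j := hmono.monotone (by omega)
      rw [if_pos (by linarith), A1 r h.le, h1 r h]; ring
    · have hjr : X j ≤ X r := hmono.monotone (by omega)
      have e : (if X r + θ * l r ≤ w / (w + 1) then -(X r + θ * l r)
          else -(w / (w + 1)) + w * (X r + θ * l r - w / (w + 1)))
          = -(w / (w + 1)) + w * (X r + θ * l r - w / (w + 1)) := by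
        split_ifs with hc
        · have : X r + θ * l r = w / (w + 1) := by linarith
          rw [this]; ring
        · rfl
      rw [e, ← hd, A2 r h hr.le, A1 j le_rfl, h2 r h hr]; ring
  have iter : ∀ (n : ℕ) (i : ℤ) (θ : ℝ), 0 ≤ θ → θ < 1 →
      F^[n] (X i + θ * l i) = X (i + n * p) + θ * l (i + n * p) := by
    intro n
    induction n with
    | zero => intros; simp
    | succ k ih =>
      intro i θ h0 hθ
      rw [Function.iterate_succ_apply, step i θ h0 hθ, ih _ θ h0 hθ]
      rw [show i + p + k * p = i + (k + 1 : ℕ) * p by push_cast; ring]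
  funext x
  obtain ⟨i, hi, hi'⟩ : ∃ i, X i ≤ x ∧ x < X (i + 1) := by
    have hm : ∀ m : ℤ, X (m * q) = m := by
      intro m; have := hXm m 0; simpa [hX0] using this
    obtain ⟨i, hi, hmax⟩ := Int.exists_greatest_of_bdd (P := fun i => X i ≤ x)
      ⟨(⌊x⌋ + 1) * q, fun z hz => by
        refine (hmono.lt_iff_lt.1 (lt_of_le_of_lt hz ?_)).le
        rw [hm]; push_cast; exact Int.lt_floor_add_one x⟩
      ⟨⌊x⌋ * q, by rw [hm]; exact Int.floor_le x⟩
    refine ⟨i, hi, ?_⟩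
    by_contra hc
    have := hmax (i + 1) (not_lt.1 hc)
    omega
  have hli := hl i
  have e : x = X i + (x - X i) / l i * l i := by field_simp; ring
  have := iter q i ((x - X i) / l i) (div_nonneg (by linarith) hli.le)
    (by rw [div_lt_one hli]; rw [hX] at hi'; linarith)
  rw [← e, mul_comm (q : ℤ) p, hXm, hlm] at this
  rw [this]
  linarith


/-- For `w > 0`, coprime `p, q` with `q ≥ 1` and `1 ≤ j ≤ ⌈δq⌉ - 1` there is a
unique `b ∈ (0,1)` with `(1-b)^j (1+wb)^{q-j} = 1`, and for this `b` there is
`ω` such that the `q`-th iterate of the lift `x ↦ x + ω + b φ_w(x)` is the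
translation by `p`: the `p/q`-tongue pinches at coupling `b`. -/
theorem stmt0 (w : ℝ) (hw : 0 < w) (p : ℤ) (q j : ℕ) (hq : 1 ≤ q)
    (hpq : Int.gcd p q = 1) (hj1 : 1 ≤ j)
    (hj2 : (j : ℤ) ≤ ⌈(w / (w + 1)) * q⌉ - 1) :
    (∃! b : ℝ, b ∈ Set.Ioo (0 : ℝ) 1 ∧ (1 - b) ^ j * (1 + w * b) ^ (q - j) = 1) ∧
    ∀ b ∈ Set.Ioo (0 : ℝ) 1, (1 - b) ^ j * (1 + w * b) ^ (q - j) = 1 →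
      ∃ ω : ℝ, (fun x => x + ω + b * phiW w x)^[q] = fun x => x + (p : ℝ) := by

  have hlt : (j : ℝ) < w / (w + 1) * q := by
    have : (j : ℤ) < ⌈(w / (w + 1)) * q⌉ := by omega
    have := Int.lt_ceil.1 this
    exact_mod_cast this
  have hjq : j < q := by
    have hq' : (1 : ℝ) ≤ q := by exact_mod_cast hq
    have : w / (w + 1) < 1 := by rw [div_lt_one (by linarith)]; linarith
    have : (j : ℝ) < q := by nlinarith
    exact_mod_cast this
  refine ⟨aux_exists w hw q j hj1 hjq hlt, fun b hb hP => ?_⟩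
  obtain ⟨l, X, hl, hper, h1, h2, hX0, hX, hXq⟩ := aux_lengths w b hw hb p q j hpq hjq hP
  exact ⟨X p, aux_conj w b hw hb p q j hjq l X hl hper h1 h2 hX0 hX hXq⟩
end

section
/- Let w > 0 and δ = w/(w+1), let p and q be coprime integers with q ≥ 1, let j be an integer with 1 ≤ j ≤ ⌈δq⌉ − 1, and let b ∈ (0,1) satisfy (1−b)^j (1+wb)^{q−j} = 1. If ω ∈ ℝ is such that the map f(x) = x + ω + b·φ_w(x) satisfies f^[q](δ) = δ + p (i.e., the break point x_d = δ lies on a p/q-periodic orbit), then f^[q](x) = x + p for every x ∈ ℝ. -/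
/-- the lift -/
noncomputable def ff (w b ω : ℝ) (x : ℝ) : ℝ := x + ω + b * phiW w x

noncomputable def sR (w b x : ℝ) : ℝ := if Int.fract x < w / (w + 1) then 1 - b else 1 + w * b

noncomputable def sL (w b x : ℝ) : ℝ :=
  if 0 < Int.fract x ∧ Int.fract x ≤ w / (w + 1) then 1 - b else 1 + w * b

lemma ff_add_int (w b ω x : ℝ) (n : ℤ) : ff w b ω (x + n) = ff w b ω x + n := by
  simp only [ff, phiW, Int.fract_add_intCast]; ring

lemma sR_add_int (w b x : ℝ) (n : ℤ) : sR w b (x + n) = sR w b x := by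
  simp only [sR, Int.fract_add_intCast]

lemma sL_add_int (w b x : ℝ) (n : ℤ) : sL w b (x + n) = sL w b x := by
  simp only [sL, Int.fract_add_intCast]

lemma iter_add_int (w b ω : ℝ) (i : ℕ) (x : ℝ) (n : ℤ) :
    (ff w b ω)^[i] (x + n) = (ff w b ω)^[i] x + n := by
  induction i generalizing x with
  | zero => rfl
  | succ i ih => simp only [Function.iterate_succ_apply, ff_add_int, ih]

lemma ff_strictMono {w b ω : ℝ} (hw : 0 < w) (hb0 : 0 < b) (hb1 : b < 1) :
    StrictMono (ff w b ω) := by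
  have hd : (1 + w) * (w / (w + 1)) = w := by field_simp; ring
  have hm : ∀ x y, x < y → x + phiW w x ≤ y + phiW w y := by
    intro x y hxy
    have e : ∀ z, (⌊z⌋ : ℝ) ≤ z + phiW w z ∧ z + phiW w z ≤ ⌊z⌋ + 1 := by
      intro z
      have h1 := Int.floor_add_fract z
      have h2 := Int.fract_lt_one z
      unfold phiW
      split_ifs with h <;> constructor <;> nlinarith
    rcases (Int.floor_mono hxy.le).lt_or_eq with h | h
    · have : (⌊x⌋ : ℝ) + 1 ≤ ⌊y⌋ := by exact_mod_cast h
      linarith [(e x).2, (e y).1]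
    · have h1 := Int.floor_add_fract x
      have h2 := Int.floor_add_fract y
      rw [← h] at h2
      unfold phiW
      split_ifs <;> nlinarith
  intro x y hxy
  have := hm x y hxy
  unfold ff
  nlinarith

lemma phi_eq {w : ℝ} (hw : 0 < w) (n : ℤ) (x : ℝ) (h1 : w / (w + 1) - 1 + n ≤ x)
    (h2 : x ≤ w / (w + 1) + n) : phiW w x = if x < n then w * (x - n) else n - x := by
  have hd : (1 + w) * (w / (w + 1)) = w := by field_simp; ring
  have hd0 : 0 < w / (w + 1) := by positivity
  have hd1 : w / (w + 1) < 1 := by rw [div_lt_one (by linarith)]; linarith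
  unfold phiW
  by_cases h : x < n
  · have hf : Int.fract x = x - n + 1 := by
      rw [Int.fract_eq_iff]; exact ⟨by linarith, by linarith, n - 1, by push_cast; ring⟩
    rw [if_pos h, hf]
    split_ifs with h'
    · have : x = n + w / (w + 1) - 1 := by linarith
      subst this
      linarith
    · linarith
  · have hf : Int.fract x = x - n := by
      rw [Int.fract_eq_iff]; exact ⟨by linarith, by linarith, n, by ring⟩
    rw [if_neg h, hf, if_pos (by linarith)]
    ring

lemma sR_eq {w : ℝ} (b : ℝ) (hw : 0 < w) (n : ℤ) (x : ℝ) (h1 : w / (w + 1) - 1 + n ≤ x)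
    (h2 : x < w / (w + 1) + n) : sR w b x = if x < n then 1 + w * b else 1 - b := by
  have hd0 : 0 < w / (w + 1) := by positivity
  have hd1 : w / (w + 1) < 1 := by rw [div_lt_one (by linarith)]; linarith
  unfold sR
  by_cases h : x < n
  · have hf : Int.fract x = x - n + 1 := by
      rw [Int.fract_eq_iff]; exact ⟨by linarith, by linarith, n - 1, by push_cast; ring⟩
    rw [if_pos h, if_neg (by rw [hf]; linarith)]
  · have hf : Int.fract x = x - n := by
      rw [Int.fract_eq_iff]; exact ⟨by linarith, by linarith, n, by ring⟩
    rw [if_neg h, if_pos (by rw [hf]; linarith)]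

lemma sL_eq {w : ℝ} (b : ℝ) (hw : 0 < w) (n : ℤ) (x : ℝ) (h1 : w / (w + 1) - 1 + n < x)
    (h2 : x ≤ w / (w + 1) + n) : sL w b x = if x ≤ n then 1 + w * b else 1 - b := by
  have hd0 : 0 < w / (w + 1) := by positivity
  have hd1 : w / (w + 1) < 1 := by rw [div_lt_one (by linarith)]; linarith
  unfold sL
  by_cases h : x < n
  · have hf : Int.fract x = x - n + 1 := by
      rw [Int.fract_eq_iff]; exact ⟨by linarith, by linarith, n - 1, by push_cast; ring⟩
    rw [if_pos h.le, if_neg (by rw [hf]; rintro ⟨_, h⟩; linarith)]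
  · have hf : Int.fract x = x - n := by
      rw [Int.fract_eq_iff]; exact ⟨by linarith, by linarith, n, by ring⟩
    by_cases h' : x ≤ n
    · rw [if_pos h', if_neg (by rw [hf]; rintro ⟨h, _⟩; linarith)]
    · rw [if_neg h', if_pos (by rw [hf]; constructor <;> linarith)]

lemma one_step {w b ω : ℝ} (hw : 0 < w) (hb0 : 0 < b) (y t y' : ℝ)
    (hyt : y < t) (hty : t < y')
    (hfree : ∀ n : ℤ, ¬ (y < w / (w + 1) + n ∧ w / (w + 1) + n < y')) :
    ff w b ω t - ff w b ω y ≤ sR w b y * (t - y) ∧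
    sL w b y' * (y' - t) ≤ ff w b ω y' - ff w b ω t ∧
    (t - y) * (ff w b ω y' - ff w b ω y) ≤ (ff w b ω t - ff w b ω y) * (y' - y) := by
  obtain ⟨n, h1, h2⟩ : ∃ n : ℤ, w / (w + 1) - 1 + n ≤ y ∧ y < w / (w + 1) + n := by
    refine ⟨⌊y - w / (w + 1)⌋ + 1, ?_, ?_⟩
    · have := Int.floor_le (y - w / (w + 1)); push_cast; linarith
    · have := Int.lt_floor_add_one (y - w / (w + 1)); push_cast; linarith
  have h3 : y' ≤ w / (w + 1) + n := by
    by_contra h; exact hfree n ⟨h2, not_le.mp h⟩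
  rw [sR_eq b hw n y h1 h2, sL_eq b hw n y' (by linarith) h3]
  unfold ff
  rw [phi_eq hw n y h1 h2.le, phi_eq hw n t (by linarith) (by linarith),
    phi_eq hw n y' (by linarith) h3]
  have hwb : 0 < w * b := by positivity
  obtain ⟨Y, rfl⟩ : ∃ Y, y = Y + n := ⟨y - n, by ring⟩
  obtain ⟨T, rfl⟩ : ∃ Y, t = Y + n := ⟨t - n, by ring⟩
  obtain ⟨Z, rfl⟩ : ∃ Y, y' = Y + n := ⟨y' - n, by ring⟩
  simp only [add_sub_cancel_right, add_lt_iff_neg_right, add_le_iff_nonpos_left]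
  have a1 : Y < T := by linarith
  have a2 : T < Z := by linarith
  have hk : 0 < b * (1 + w) := by positivity
  refine ⟨?_, ?_, ?_⟩
  · split_ifs <;> nlinarith
  · split_ifs <;> nlinarith
  · by_cases c1 : Y < 0 <;> by_cases c2 : T < 0 <;> by_cases c3 : Z < 0
    all_goals simp only [c1, c2, c3, if_true, if_false]
    · linarith
    · have : 0 ≤ b * (1 + w) * ((T - Y) * Z) := by
        apply mul_nonneg hk.le; apply mul_nonneg <;> linarith
      linarith
    · linarith
    · have : 0 ≤ b * (1 + w) * ((Z - T) * (-Y)) := by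
        apply mul_nonneg hk.le; apply mul_nonneg <;> linarith
      linarith
    all_goals linarith

def orb (w b ω : ℝ) : Set ℝ := {y | ∃ (i : ℕ) (n : ℤ), y = (ff w b ω)^[i] (w / (w + 1)) + n}

lemma iter_steps {w b ω : ℝ} (hw : 0 < w) (hb0 : 0 < b) (hb1 : b < 1)
    (hO : ∀ o ∈ orb w b ω, ∃ u ∈ orb w b ω, ff w b ω u = o) (y t y' : ℝ)
    (hyt : y < t) (hty : t < y')
    (hfree : ∀ o ∈ orb w b ω, ¬ (y < o ∧ o < y')) (i : ℕ) :
    (ff w b ω)^[i] y < (ff w b ω)^[i] t ∧ (ff w b ω)^[i] t < (ff w b ω)^[i] y' ∧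
    (∀ o ∈ orb w b ω, ¬ ((ff w b ω)^[i] y < o ∧ o < (ff w b ω)^[i] y')) ∧
    (ff w b ω)^[i] t - (ff w b ω)^[i] y ≤
      (∏ l ∈ Finset.range i, sR w b ((ff w b ω)^[l] y)) * (t - y) ∧
    (∏ l ∈ Finset.range i, sL w b ((ff w b ω)^[l] y')) * (y' - t) ≤
      (ff w b ω)^[i] y' - (ff w b ω)^[i] t ∧
    (t - y) * ((ff w b ω)^[i] y' - (ff w b ω)^[i] y) ≤
      ((ff w b ω)^[i] t - (ff w b ω)^[i] y) * (y' - y) := by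
  have hm := ff_strictMono (ω := ω) hw hb0 hb1
  have hwb : 0 < w * b := by positivity
  induction i with
  | zero => simpa using ⟨hyt, hty, fun o ho h => not_lt.mp fun h' => hfree o ho ⟨h, h'⟩⟩
  | succ i ih =>
    obtain ⟨i1, i2, i3, i4, i5, i6⟩ := ih
    simp only [Function.iterate_succ_apply', Finset.prod_range_succ]
    set Y := (ff w b ω)^[i] y
    set T := (ff w b ω)^[i] t
    set Z := (ff w b ω)^[i] y'
    obtain ⟨s1, s2, s3⟩ := one_step (ω := ω) hw hb0 Y T Z i1 i2
      (fun n => i3 _ ⟨0, n, rfl⟩)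
    have p1 : 0 < sR w b Y := by unfold sR; split_ifs <;> linarith
    have p2 : 0 < sL w b Z := by unfold sL; split_ifs <;> linarith
    refine ⟨hm i1, hm i2, ?_, ?_, ?_, ?_⟩
    · intro o ho h
      obtain ⟨u, hu, rfl⟩ := hO o ho
      exact i3 u hu ⟨hm.lt_iff_lt.mp h.1, hm.lt_iff_lt.mp h.2⟩
    · nlinarith
    · nlinarith
    · have q1 : 0 < Z - Y := by linarith
      have q2 : 0 < ff w b ω Z - ff w b ω Y := by linarith [hm (i1.trans i2)]
      have q3 : 0 < y' - y := by linarith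
      have r1 := mul_le_mul_of_nonneg_right s3 q3.le
      have r2 := mul_le_mul_of_nonneg_right i6 q2.le
      refine le_of_mul_le_mul_right ?_ q1
      nlinarith

lemma prod_const (s : ℝ → ℝ) (w b ω : ℝ) (hs : ∀ x (n : ℤ), s (x + n) = s x) (p : ℤ) (q : ℕ)
    (hs0 : ∀ x, 0 < s x)
    (hF : ∀ o ∈ orb w b ω, (ff w b ω)^[q] o = o + p) (y : ℝ) (hy : y ∈ orb w b ω) :
    ∏ l ∈ Finset.range q, s ((ff w b ω)^[l] y) =
      ∏ l ∈ Finset.range q, s ((ff w b ω)^[l] (w / (w + 1))) := by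
  obtain ⟨i, n, rfl⟩ := hy
  simp only [iter_add_int, hs]
  induction i with
  | zero => rfl
  | succ i ih =>
    rw [← ih]
    set z := (ff w b ω)^[i] (w / (w + 1)) with hz
    have h1 := Finset.prod_range_succ (fun l => s ((ff w b ω)^[l] z)) q
    have h2 := Finset.prod_range_succ' (fun l => s ((ff w b ω)^[l] z)) q
    rw [h1] at h2
    have hzO : z ∈ orb w b ω := ⟨i, 0, by simp [hz]⟩
    simp only [hF z hzO, hs, Function.iterate_zero, id] at h2
    rw [Function.iterate_succ_apply' (n := i), ← hz]
    simp only [← Function.iterate_succ_apply]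
    exact (mul_right_cancel₀ (hs0 z).ne' h2).symm

lemma pow_anti {A B : ℝ} (hA : 0 < A) (hAB : A ≤ B) (q j k : ℕ) (hjk : j ≤ k) (hk : k ≤ q) :
    A ^ k * B ^ (q - k) ≤ A ^ j * B ^ (q - j) := by
  obtain ⟨d, rfl⟩ := Nat.exists_eq_add_of_le hjk
  have e : q - j = d + (q - (j + d)) := by omega
  rw [e, pow_add, pow_add, mul_assoc]
  have := pow_le_pow_left₀ hA.le hAB d
  have hB : 0 < B := by linarith
  gcongr

/-- If `b ∈ (0,1)` solves `(1-b)^j (1+wb)^{q-j} = 1` for some `1 ≤ j ≤ ⌈δq⌉ - 1`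
and the break point `x_d = δ` lies on a `p/q`-periodic orbit of
`f(x) = x + ω + b φ_w(x)`, then `f^[q]` is the translation by `p`. -/
theorem stmt1 (w : ℝ) (hw : 0 < w) (p : ℤ) (q j : ℕ) (hq : 1 ≤ q)
    (hpq : Int.gcd p q = 1) (hj1 : 1 ≤ j)
    (hj2 : (j : ℤ) ≤ ⌈(w / (w + 1)) * q⌉ - 1)
    (b : ℝ) (hb : b ∈ Set.Ioo (0 : ℝ) 1)
    (hbe : (1 - b) ^ j * (1 + w * b) ^ (q - j) = 1)
    (ω : ℝ)
    (hper : (fun x => x + ω + b * phiW w x)^[q] (w / (w + 1)) = w / (w + 1) + (p : ℝ)) :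
    (fun x => x + ω + b * phiW w x)^[q] = fun x => x + (p : ℝ) := by
  obtain ⟨hb0, hb1⟩ := hb
  change (ff w b ω)^[q] (w / (w + 1)) = _ at hper
  change (ff w b ω)^[q] = _
  have hwb : 0 < w * b := by positivity
  have hd0 : 0 < w / (w + 1) := by positivity
  have hd1 : w / (w + 1) < 1 := by rw [div_lt_one (by linarith)]; linarith
  have hq0 : (0 : ℝ) < q := by exact_mod_cast hq
  have hjq : j ≤ q := by
    have : ⌈(w / (w + 1)) * q⌉ ≤ (q : ℤ) := by
      rw [Int.ceil_le]; push_cast; nlinarith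
    omega
  have hF : ∀ o ∈ orb w b ω, (ff w b ω)^[q] o = o + p := by
    rintro o ⟨i, n, rfl⟩
    rw [iter_add_int, ← Function.iterate_add_apply, add_comm q i, Function.iterate_add_apply, hper,
      iter_add_int]; ring
  have hO : ∀ o ∈ orb w b ω, ∃ u ∈ orb w b ω, ff w b ω u = o := by
    rintro o ⟨i, n, rfl⟩
    rcases i with _ | i
    · refine ⟨_, ⟨q - 1, n - p, rfl⟩, ?_⟩
      rw [ff_add_int, ← Function.iterate_succ_apply' (f := ff w b ω), Nat.succ_eq_add_one,
        Nat.sub_add_cancel hq, hper]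
      push_cast; simp
    · refine ⟨_, ⟨i, n, rfl⟩, ?_⟩
      rw [ff_add_int, ← Function.iterate_succ_apply' (f := ff w b ω)]
  -- the break point is visited once
  have hvis : ∀ i, 0 < i → i < q → Int.fract ((ff w b ω)^[i] (w / (w + 1))) ≠ w / (w + 1) := by
    intro i hi0 hiq hfr
    have key : ∀ (i : ℕ) (n : ℤ), (ff w b ω)^[i] (w / (w + 1)) = w / (w + 1) + n →
        ∀ m : ℕ, (ff w b ω)^[i * m] (w / (w + 1)) = w / (w + 1) + ((m * n : ℤ) : ℝ) := by
      intro i n h m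
      induction m with
      | zero => simp
      | succ m ih =>
        rw [Nat.mul_succ, Function.iterate_add_apply, h, iter_add_int, ih]
        push_cast; ring
    have e1 := key i ⌊(ff w b ω)^[i] (w / (w + 1))⌋
      (by have := Int.fract_add_floor ((ff w b ω)^[i] (w / (w + 1))); rw [hfr] at this; exact this.symm) q
    have e2 := key q p hper i
    rw [mul_comm q i, e1] at e2
    have e3 := add_left_cancel e2
    have e4 := Int.cast_injective e3
    have e5 : (q : ℤ) ∣ i * p := ⟨_, e4.symm⟩
    have e6 : (q : ℤ) ∣ i := by
      refine Int.dvd_of_dvd_mul_left_of_gcd_one e5 ?_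
      rw [Int.gcd_comm]; exact hpq
    have := Nat.le_of_dvd hi0 (Int.natCast_dvd_natCast.mp e6)
    omega
  have hfd : Int.fract (w / (w + 1)) = w / (w + 1) := Int.fract_eq_self.mpr ⟨hd0.le, hd1⟩
  have hsR0 : ∀ x, 0 < sR w b x := by intro x; unfold sR; split_ifs <;> linarith
  have hsL0 : ∀ x, 0 < sL w b x := by intro x; unfold sL; split_ifs <;> linarith
  have hdich : (∏ l ∈ Finset.range q, sR w b ((ff w b ω)^[l] (w / (w + 1)))) ≤ 1 ∨
      1 ≤ ∏ l ∈ Finset.range q, sL w b ((ff w b ω)^[l] (w / (w + 1))) := by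
    obtain ⟨r, rfl⟩ : ∃ r, q = r + 1 := ⟨q - 1, by omega⟩
    rw [Finset.prod_range_succ', Finset.prod_range_succ']
    have z1 : sR w b ((ff w b ω)^[0] (w / (w + 1))) = 1 + w * b := by
      simp [sR, hfd]
    have z2 : sL w b ((ff w b ω)^[0] (w / (w + 1))) = 1 - b := by
      simp [sL, hfd, hd0]
    rw [z1, z2]
    have hle : (∏ l ∈ Finset.range r, sR w b ((ff w b ω)^[l+1] (w / (w + 1)))) ≤
        ∏ l ∈ Finset.range r, sL w b ((ff w b ω)^[l+1] (w / (w + 1))) := by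
      refine Finset.prod_le_prod (fun l _ => (hsR0 _).le) ?_
      intro l hl
      have hne := hvis (l+1) (by omega) (by have := Finset.mem_range.mp hl; omega)
      unfold sR sL
      split_ifs with c1 c2 c2
      · exact le_rfl
      · linarith
      · exact absurd (le_antisymm c2.2 (not_lt.mp c1)) hne
      · exact le_rfl
    obtain ⟨k, hkr, hk⟩ : ∃ k ≤ r, (∏ l ∈ Finset.range r,
        sR w b ((ff w b ω)^[l+1] (w / (w + 1)))) = (1 - b) ^ k * (1 + w * b) ^ (r - k) := by
      clear hle hvis hF hper hpq hj2 hbe hjq hq hq0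
      induction r with
      | zero => exact ⟨0, le_rfl, by simp⟩
      | succ r ih =>
        obtain ⟨k, hk, e⟩ := ih
        rw [Finset.prod_range_succ, e]
        unfold sR
        split_ifs
        · exact ⟨k + 1, by omega, by rw [Nat.add_sub_add_right]; ring⟩
        · exact ⟨k, by omega, by rw [Nat.succ_sub hk, pow_succ]; ring⟩
    rcases le_or_gt j k with h | h
    · left
      rw [hk]
      have := pow_anti (A := 1 - b) (B := 1 + w * b) (by linarith) (by linarith) (r + 1) j k h
        (by omega)
      rw [hbe, Nat.succ_sub hkr, pow_succ] at this
      linarith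
    · right
      have := pow_anti (A := 1 - b) (B := 1 + w * b) (by linarith) (by linarith) (r + 1) (k + 1) j h
        hjq
      rw [hbe, Nat.add_sub_add_right] at this
      have h3 := mul_le_mul_of_nonneg_right hle (show 0 ≤ 1 - b by linarith)
      rw [hk] at h3
      calc (1 : ℝ) ≤ _ := this
        _ = (1 - b) ^ k * (1 + w * b) ^ (r - k) * (1 - b) := by ring
        _ ≤ _ := h3
  funext x
  by_cases hxO : x ∈ orb w b ω
  · exact hF x hxO
  have hne : (Finset.range q).Nonempty := ⟨0, Finset.mem_range.mpr (by omega)⟩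
  set g : ℕ → ℝ := fun i => (ff w b ω)^[i] (w / (w + 1)) with hg
  obtain ⟨i1, hi1, hmax⟩ := Finset.exists_max_image (Finset.range q)
    (fun i => g i + (⌊x - g i⌋ : ℝ)) hne
  obtain ⟨i2, hi2, hmin⟩ := Finset.exists_min_image (Finset.range q)
    (fun i => g i + ((⌊x - g i⌋ + 1 : ℤ) : ℝ)) hne
  set y := g i1 + (⌊x - g i1⌋ : ℝ) with hy
  set y' := g i2 + ((⌊x - g i2⌋ + 1 : ℤ) : ℝ) with hy'
  have hyO : y ∈ orb w b ω := ⟨i1, _, rfl⟩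
  have hyO' : y' ∈ orb w b ω := ⟨i2, _, rfl⟩
  have hyx : y < x := by
    refine lt_of_le_of_ne ?_ (fun h => hxO (h ▸ hyO))
    have := Int.floor_le (x - g i1); linarith
  have hxy : x < y' := by
    have := Int.lt_floor_add_one (x - g i2)
    rw [hy']; push_cast; linarith
  have hred : ∀ (i : ℕ), ∃ l < q, ∃ n : ℤ, g i = g l + n := by
    intro i
    induction i with
    | zero => exact ⟨0, by omega, 0, by simp⟩
    | succ i ih =>
      obtain ⟨l, hl, n, e⟩ := ih
      have e1 : g (i + 1) = g (l + 1) + n := by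
        simp only [hg, Function.iterate_succ_apply'] at e ⊢
        rw [e, ff_add_int]
      rcases Nat.lt_or_ge (l + 1) q with h | h
      · exact ⟨l + 1, h, n, e1⟩
      · have : l + 1 = q := by omega
        refine ⟨0, by omega, p + n, ?_⟩
        rw [e1, this]
        simp only [hg, hper, Function.iterate_zero, id]; push_cast; ring
  have hfree : ∀ o ∈ orb w b ω, ¬ (y < o ∧ o < y') := by
    rintro o ⟨i, n, rfl⟩ ⟨h1, h2⟩
    obtain ⟨l, hl, m, e⟩ := hred i
    change y < g i + n at h1
    change g i + n < y' at h2
    have a1 := hmax l (Finset.mem_range.mpr hl)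
    have a2 := hmin l (Finset.mem_range.mpr hl)
    rcases le_or_gt (m + n) ⌊x - g l⌋ with h | h
    · have : ((m + n : ℤ) : ℝ) ≤ ⌊x - g l⌋ := by exact_mod_cast h
      push_cast at this; linarith
    · have : ((⌊x - g l⌋ + 1 : ℤ) : ℝ) ≤ ((m + n : ℤ) : ℝ) := by exact_mod_cast h
      push_cast at this a2; linarith
  obtain ⟨-, -, -, b1, b2, b3⟩ := iter_steps hw hb0 hb1 hO y x y' hyx hxy hfree q
  rw [prod_const (sR w b) w b ω (sR_add_int w b) p q hsR0 hF y hyO, hF y hyO] at b1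
  rw [prod_const (sL w b) w b ω (sL_add_int w b) p q hsL0 hF y' hyO', hF y' hyO'] at b2
  rw [hF y hyO, hF y' hyO'] at b3
  apply le_antisymm
  · rcases hdich with h | h
    · have := mul_le_mul_of_nonneg_right h (show 0 ≤ x - y by linarith)
      linarith
    · have := mul_le_mul_of_nonneg_right h (show 0 ≤ y' - x by linarith)
      linarith
  · have : (x - y) * (y' - y) ≤ ((ff w b ω)^[q] x - (y + p)) * (y' - y) := by
      calc _ = (x - y) * (y' + p - (y + p)) := by ring
        _ ≤ _ := b3
    have := le_of_mul_le_mul_right this (by linarith)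
    linarith
end

section
/- Let m ≥ 1 and let k_1, …, k_m be real numbers with k_i ≥ −1 for all i, min_i k_i < 0, and max_i k_i > 0. Define p(y) = ∏_{i=1}^m (1 + y·k_i). Then the equation p(y) = 1 has a solution y ∈ (0,1) if and only if ∑_{i=1}^m k_i > 0 and ∏_{i=1}^m (1 + k_i) < 1. Moreover, if y* ∈ (0,1) satisfies p(y*) = 1, then y* is the unique solution of p(y) = 1 in (0,1) and p'(y*) < 0. -/
lemma key_aux (m : ℕ) (k : Fin m → ℝ) (hk : ∀ i, -1 ≤ k i) (hpos : ∃ i, 0 < k i)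
    (x y : ℝ) (hx0 : 0 ≤ x) (hx1 : x ≤ 1) (hy0 : 0 ≤ y) (hy1 : y < 1) (hxy : x ≠ y) :
    ∏ i, (1 + x * k i) <
      (∏ i, (1 + y * k i)) * Real.exp ((x - y) * ∑ i, k i / (1 + y * k i)) := by
  have hp : ∀ i, 0 < 1 + y * k i := fun i => by nlinarith [hk i]
  have hq : ∀ i, 0 ≤ 1 + x * k i := fun i => by nlinarith [hk i]
  have e : ∀ i, 1 + x * k i = (1 + y * k i) * ((x - y) * (k i / (1 + y * k i)) + 1) := by
    intro i
    have := (hp i).ne'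
    have h2 : (1 + y * k i) * (k i / (1 + y * k i)) = k i := mul_div_cancel₀ _ this
    linear_combination (-(x - y)) * h2
  rw [Finset.mul_sum, Real.exp_sum, ← Finset.prod_mul_distrib]
  by_cases h0 : ∃ i, 1 + x * k i = 0
  · obtain ⟨i, hi⟩ := h0
    rw [Finset.prod_eq_zero (Finset.mem_univ i) hi]
    exact Finset.prod_pos fun i _ => mul_pos (hp i) (Real.exp_pos _)
  · push Not at h0
    obtain ⟨j, hj⟩ := hpos
    refine Finset.prod_lt_prod (fun i _ => lt_of_le_of_ne (hq i) (h0 i).symm) ?_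
      ⟨j, Finset.mem_univ j, ?_⟩
    · intro i _
      rw [e i]
      exact mul_le_mul_of_nonneg_left (Real.add_one_le_exp _) (hp i).le
    · rw [e j]
      refine mul_lt_mul_of_pos_left (Real.add_one_lt_exp ?_) (hp j)
      exact mul_ne_zero (sub_ne_zero.2 hxy) (div_pos hj (hp j)).ne'

lemma deriv_aux (m : ℕ) (k : Fin m → ℝ) (y : ℝ) (hp : ∀ i, 0 < 1 + y * k i) :
    deriv (fun y : ℝ => ∏ i, (1 + y * k i)) y =
      (∏ i, (1 + y * k i)) * ∑ i, k i / (1 + y * k i) := by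
  have h := HasDerivAt.fun_finsetProd (u := Finset.univ) (f := fun i (y : ℝ) => 1 + y * k i)
    (f' := k) (x := y) (fun i _ => by
      simpa using ((hasDerivAt_id y).mul_const (k i)).const_add 1)
  rw [h.deriv, Finset.mul_sum]
  refine Finset.sum_congr rfl fun i _ => ?_
  rw [← Finset.prod_erase_mul _ _ (Finset.mem_univ i), smul_eq_mul]
  have := (hp i).ne'
  field_simp


/-- Calculus lemma: for `p(y) = ∏ (1 + y k_i)` with all `k_i ≥ -1`, some `k_i < 0`
and some `k_i > 0`, the equation `p(y) = 1` has a solution in `(0,1)` iff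
`∑ k_i > 0` and `∏ (1 + k_i) < 1`; moreover any solution `y* ∈ (0,1)` is unique
and satisfies `p'(y*) < 0`. -/
theorem stmt2 (m : ℕ) (hm : 1 ≤ m) (k : Fin m → ℝ) (hk : ∀ i, -1 ≤ k i)
    (hneg : ∃ i, k i < 0) (hpos : ∃ i, 0 < k i) :
    ((∃ y ∈ Set.Ioo (0 : ℝ) 1, ∏ i, (1 + y * k i) = 1) ↔
      (0 < ∑ i, k i ∧ ∏ i, (1 + k i) < 1)) ∧
    ∀ y ∈ Set.Ioo (0 : ℝ) 1, ∏ i, (1 + y * k i) = 1 →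
      (∀ y' ∈ Set.Ioo (0 : ℝ) 1, ∏ i, (1 + y' * k i) = 1 → y' = y) ∧
      deriv (fun y : ℝ => ∏ i, (1 + y * k i)) y < 0 := by
  have K := key_aux m k hk hpos
  have S : ∀ y ∈ Set.Ioo (0 : ℝ) 1, ∏ i, (1 + y * k i) = 1 →
      ∑ i, k i / (1 + y * k i) < 0 := by
    intro y hy h
    have := K 0 y le_rfl zero_le_one hy.1.le hy.2 hy.1.ne
    simp only [h, zero_mul, add_zero, Finset.prod_const_one, one_mul, Real.one_lt_exp_iff] at this
    nlinarith [hy.1]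
  refine ⟨⟨?_, ?_⟩, ?_⟩
  · rintro ⟨y, hy, h⟩
    constructor
    · have := K y 0 hy.1.le hy.2.le le_rfl zero_lt_one hy.1.ne'
      simp only [h, zero_mul, add_zero, Finset.prod_const_one, one_mul, Real.one_lt_exp_iff,
        div_one, sub_zero] at this
      exact pos_of_mul_pos_right this hy.1.le
    · have := K 1 y zero_le_one le_rfl hy.1.le hy.2 hy.2.ne'
      simp only [h, one_mul] at this
      refine this.trans (Real.exp_lt_one_iff.2 ?_)
      exact mul_neg_of_pos_of_neg (sub_pos.2 hy.2) (S y hy h)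
  · rintro ⟨hs, h1⟩
    have hc : ContinuousAt (fun y : ℝ => ∑ i, k i / (1 + y * k i)) 0 := by
      refine tendsto_finsetSum _ fun i _ => ?_
      exact ContinuousAt.div (by fun_prop) (by fun_prop) (by simp)
    have ev := hc.eventually (lt_mem_nhds (a := 0) (by simpa using hs))
    have ev2 := (ev.filter_mono nhdsWithin_le_nhds).and
      (Ioo_mem_nhdsGT (zero_lt_one (α := ℝ)))
    obtain ⟨y, hy, hy01⟩ := ev2.exists
    have h2 := K 0 y le_rfl zero_le_one hy01.1.le hy01.2 hy01.1.ne
    simp only [zero_mul, add_zero, Finset.prod_const_one] at h2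
    have h3 : Real.exp ((0 - y) * ∑ i, k i / (1 + y * k i)) < 1 :=
      Real.exp_lt_one_iff.2 (by nlinarith [mul_pos hy01.1 hy])
    have h4 : 1 < ∏ i, (1 + y * k i) := by
      by_contra hcon
      push Not at hcon
      nlinarith [Real.exp_pos ((0 - y) * ∑ i, k i / (1 + y * k i))]
    have cont : ContinuousOn (fun y : ℝ => ∏ i, (1 + y * k i)) (Set.Icc y 1) := by fun_prop
    obtain ⟨z, hz, hz1⟩ := intermediate_value_Ioo' hy01.2.le cont
      (show (1 : ℝ) ∈ Set.Ioo _ _ from ⟨by simpa using h1, h4⟩)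
    exact ⟨z, ⟨hy01.1.trans hz.1, hz.2⟩, hz1⟩
  · intro y hy h
    constructor
    · intro z hz hz1
      by_contra hne
      have a := K z y hz.1.le hz.2.le hy.1.le hy.2 hne
      have b := K y z hy.1.le hy.2.le hz.1.le hz.2 (Ne.symm hne)
      simp only [h, hz1, one_mul, Real.one_lt_exp_iff] at a b
      have s1 := S y hy h
      have s2 := S z hz hz1
      have := neg_of_mul_pos_left a s1.le
      have := neg_of_mul_pos_left b s2.le
      linarith
    · rw [deriv_aux m k y (fun i => by nlinarith [hk i, hy.1, hy.2]), h, one_mul]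
      exact S y hy h
end

section
/- Let φ : ℝ → ℝ be Lipschitz with φ(x+1) = φ(x) for all x. Then the following are equivalent: (i) the essential infimum with respect to Lebesgue measure of deriv φ equals −1; (ii) for every b ∈ [0,1) and every ω ∈ ℝ the map x ↦ x + ω + b·φ(x) is strictly increasing, and for every b > 1 and every ω ∈ ℝ there exist x < y with x + ω + b·φ(x) > y + ω + b·φ(y). -/
open MeasureTheory

lemma aux_key (φ : ℝ → ℝ) (K : NNReal) (hK : LipschitzWith K φ) (c : ℝ) :
    (∀ᵐ x, c ≤ deriv φ x) ↔ ∀ x y, x ≤ y → c * (y - x) ≤ φ y - φ x := by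
  constructor
  · intro h x y hxy
    have hac : AbsolutelyContinuousOnInterval φ x y :=
      (hK.lipschitzOnWith (s := Set.uIcc x y)).absolutelyContinuousOnInterval
    rw [← hac.integral_deriv_eq_sub]
    have h2 : ∫ t in x..y, c = c * (y - x) := by simp [mul_comm]
    rw [← h2]
    exact intervalIntegral.integral_mono_ae hxy (by simp) hac.intervalIntegrable_deriv h
  · intro h
    have hmono : Monotone (fun x => φ x - c * x) := by
      intro x y hxy
      have := h x y hxy
      simp only
      linarith
    filter_upwards [hK.ae_differentiableAt_real] with x hx
    have h1 := hmono.deriv_nonneg (x := x)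
    have h2 : HasDerivAt (fun x => φ x - c * x) (deriv φ x - c * 1) x :=
      hx.hasDerivAt.sub ((hasDerivAt_id x).const_mul c)
    rw [h2.deriv] at h1
    linarith

lemma aux_ess (φ : ℝ → ℝ) (K : NNReal) (hK : LipschitzWith K φ) :
    essInf (deriv φ) volume = -1 ↔
      ((∀ᵐ x, (-1:ℝ) ≤ deriv φ x) ∧ ∀ c : ℝ, (∀ᵐ x, c ≤ deriv φ x) → c ≤ -1) := by
  have hb : ∀ x, |deriv φ x| ≤ K := fun x => norm_deriv_le_of_lipschitz hK
  have hbdd : BddAbove {a : ℝ | ∀ᵐ x, a ≤ deriv φ x} := by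
    refine ⟨K, fun a ha => ?_⟩
    obtain ⟨x, hx⟩ := (show ∀ᵐ x, a ≤ deriv φ x from ha).exists
    exact hx.trans ((le_abs_self _).trans (hb x))
  have he : essInf (deriv φ) volume = sSup {a : ℝ | ∀ᵐ x, a ≤ deriv φ x} := Filter.liminf_eq
  constructor
  · intro h
    constructor
    · rw [← h]
      apply ae_essInf_le
      exact Filter.isBoundedUnder_of ⟨-K, fun x => (abs_le.1 (hb x)).1⟩
    · intro c hc
      rw [← h, he]
      exact le_csSup hbdd hc
  · rintro ⟨h1, h2⟩
    rw [he]
    exact IsGreatest.csSup_eq ⟨h1, h2⟩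

/-- Characterization of Lipschitz standard-like forcings: a Lipschitz 1-periodic
`φ` has `essinf (deriv φ) = -1` iff the family `x ↦ x + ω + b φ(x)` is strictly
increasing for all `b ∈ [0,1)` and not weakly order preserving for all `b > 1`. -/
theorem stmt3 (φ : ℝ → ℝ) (hL : ∃ K, LipschitzWith K φ)
    (hper : ∀ x, φ (x + 1) = φ x) :
    essInf (deriv φ) volume = -1 ↔
      ((∀ b : ℝ, 0 ≤ b → b < 1 → ∀ ω : ℝ,
          StrictMono (fun x => x + ω + b * φ x)) ∧
       (∀ b : ℝ, 1 < b → ∀ ω : ℝ,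
          ∃ x y : ℝ, x < y ∧ y + ω + b * φ y < x + ω + b * φ x)) := by
  obtain ⟨K, hK⟩ := hL
  rw [aux_ess φ K hK]
  simp only [aux_key φ K hK]
  constructor
  · rintro ⟨h1, h2⟩
    constructor
    · intro b hb0 hb1 ω x y hxy
      have := mul_le_mul_of_nonneg_left (h1 x y hxy.le) hb0
      have h3 := mul_pos (sub_pos.2 hb1) (sub_pos.2 hxy)
      simp only
      nlinarith
    · intro b hb ω
      have hb0 : 0 < b := by linarith
      by_contra! hcon
      have h3 := h2 (-(1 / b)) (fun x y hxy => by
        rcases hxy.eq_or_lt with rfl | hlt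
        · simp
        have h4 := hcon x y hlt
        have h5 : -(1 / b) * (y - x) = (-(y - x)) / b := by ring
        rw [h5, div_le_iff₀ hb0]
        linarith)
      have : 1 / b < 1 := by rw [div_lt_one hb0]; exact hb
      linarith
  · rintro ⟨h1, h2⟩
    constructor
    · intro x y hxy
      by_contra! hcon
      rcases hxy.eq_or_lt with rfl | hlt
      · simp at hcon
      have hd : 0 < φ x - φ y := by linarith
      have h3 := h1 ((y - x) / (φ x - φ y)) (div_nonneg (by linarith) hd.le)
        (by rw [div_lt_one hd]; linarith) 0 hlt
      simp only at h3
      have h4 : (y - x) / (φ x - φ y) * (φ x - φ y) = y - x := div_mul_cancel₀ _ hd.ne'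
      rw [mul_sub] at h4
      linarith
    · intro c hc
      by_contra! hcon
      rcases le_or_gt 0 c with h0 | h0
      · obtain ⟨x, y, hxy, h3⟩ := h2 2 (by norm_num) 0
        have h4 := hc x y hxy.le
        have := mul_nonneg h0 (sub_pos.2 hxy).le
        linarith
      · have hn : 0 < -c := by linarith
        obtain ⟨x, y, hxy, h3⟩ := h2 (1 / (-c)) (by rw [lt_div_iff₀ hn]; linarith) 0
        have h4 := hc x y hxy.le
        have h5 : 1 / (-c) * (c * (y - x)) = -(y - x) := by
          have hc0 : c ≠ 0 := h0.ne
          field_simp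
        have h6 := mul_le_mul_of_nonneg_left h4 (one_div_pos.2 hn).le
        rw [h5, mul_sub] at h6
        linarith
end

section
/- Let φ : ℝ → ℝ be 1-periodic and nonconstant, and suppose there exists an entire function F : ℂ → ℂ (differentiable on all of ℂ) with F(x) = φ(x) for every real x; in particular, φ may be any nonconstant trigonometric polynomial. Then for all coprime integers p, q with q ≥ 1, every b ∈ (0,1], and every ω ∈ ℝ, the q-th iterate of the map f_{b,ω,φ}(x) = x + ω + b·φ(x) is not equal to the translation R_p : x ↦ x + p; that is, φ is not p/q-pinching for any p/q. -/
open Filter Topology Function.Periodic in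
lemma aux_schwarz (G : ℂ → ℂ) (hG : Differentiable ℂ G) (hp : ∀ z, G (z + 1) = G z + 1)
    (hpos : ∀ z : ℂ, 0 < z.im → 0 < (G z).im)
    (ht : Tendsto (fun z => (G z).im) (comap Complex.im atTop) atTop) :
    ∀ z : ℂ, 0 < z.im → z.im ≤ (G z).im := by
  set h : ℂ → ℂ := fun z => qParam 1 (G z) with hh
  have hper : Function.Periodic h ((1 : ℝ) : ℂ) := by
    intro z
    simp only [hh, Complex.ofReal_one, hp, qParam]
    rw [show 2 * (Real.pi : ℂ) * Complex.I * (G z + 1) / 1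
      = 2 * (Real.pi : ℂ) * Complex.I * G z / 1 + 2 * (Real.pi : ℂ) * Complex.I by ring]
    exact Complex.exp_periodic _
  have hd : Differentiable ℂ h := differentiable_qParam.comp hG
  have hz : ZeroAtFilter (comap Complex.im atTop) h := by
    have h1 := (qParam_tendsto (h := 1) one_pos).mono_right nhdsWithin_le_nhds
    exact h1.comp (tendsto_comap_iff.2 ht)
  have h0 : cuspFunction 1 h 0 = 0 := cuspFunction_zero_of_zero_at_inf one_pos hz
  have hdc : Differentiable ℂ (cuspFunction 1 h) := by
    intro w
    by_cases hw : w = 0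
    · rw [hw]
      exact differentiableAt_cuspFunction_zero one_pos hper (Eventually.of_forall hd)
        hz.boundedAtFilter
    · rw [← qParam_right_inv (h := 1) one_ne_zero hw]
      exact differentiableAt_cuspFunction one_ne_zero hper (hd _)
  have key : ∀ z : ℂ, 0 < z.im ↔ ‖qParam 1 z‖ < 1 := by
    intro z
    have := norm_qParam_lt_iff (h := 1) one_pos 0 z
    simpa using this.symm
  have hmaps : Set.MapsTo (cuspFunction 1 h) (Metric.ball 0 1) (Metric.closedBall 0 1) := by
    intro w hw
    rw [mem_ball_zero_iff] at hw
    rw [mem_closedBall_zero_iff]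
    by_cases hw0 : w = 0
    · rw [hw0, h0]; simp
    · rw [← qParam_right_inv (h := 1) one_ne_zero hw0] at hw ⊢
      rw [eq_cuspFunction one_ne_zero hper]
      exact ((key _).1 (hpos _ ((key _).2 hw))).le
  intro z hz
  have h2 := Complex.norm_le_norm_of_mapsTo_ball hdc.differentiableOn hmaps h0 ((key z).1 hz)
  rw [eq_cuspFunction one_ne_zero hper] at h2
  by_contra hlt
  push Not at hlt
  have h3 := (norm_qParam_lt_iff (h := 1) one_pos (G z).im z).2 hlt
  rw [← norm_qParam] at h3
  exact absurd h2 (not_le.2 h3)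

open Filter Topology in
lemma aux_proper (G K : ℂ → ℂ) (hK : Continuous K) (hp : ∀ z, K (z + 1) = K z + 1)
    (p : ℝ) (hKG : ∀ z, K (G z) = z + p)
    (hpos : ∀ z : ℂ, 0 < z.im → 0 < (G z).im) :
    Tendsto (fun z => (G z).im) (comap Complex.im atTop) atTop := by
  have hint : ∀ (m : ℤ) (z : ℂ), (K (z - m)).im = (K z).im := by
    have hper : Function.Periodic (fun z => (K z).im) 1 := by
      intro z; simp [hp]
    intro m z
    simpa using hper.sub_int_mul_eq (x := z) m
  rw [tendsto_atTop]
  intro M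
  have hc : IsCompact (Set.Icc (0:ℝ) 1 ×ℂ Set.Icc (0:ℝ) M) := isCompact_Icc.reProdIm isCompact_Icc
  obtain ⟨N, hN⟩ := (hc.image (Complex.continuous_im.comp hK)).bddAbove
  filter_upwards [tendsto_comap.eventually (eventually_gt_atTop (max N 0))] with z hz
  by_contra hlt
  push Not at hlt
  have hz0 : 0 < z.im := lt_of_le_of_lt (le_max_right _ _) hz
  have hzN : N < z.im := lt_of_le_of_lt (le_max_left _ _) hz
  have := hN ⟨G z - (⌊(G z).re⌋ : ℤ), ?_, rfl⟩
  · simp only [Function.comp, hint, hKG] at this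
    simp at this
    linarith
  · rw [Complex.mem_reProdIm]
    have := hpos z hz0
    have h1 := Int.floor_le (G z).re
    have h2 := Int.lt_floor_add_one (G z).re
    have h3 := Int.fract_lt_one (G z).re
    refine ⟨⟨?_, ?_⟩, ?_, ?_⟩ <;> simp <;> linarith

open Filter Topology in
lemma aux_pos (G : ℂ → ℂ) (hG : Differentiable ℂ G) (hp : ∀ z, G (z + 1) = G z + 1)
    (hr : ∀ x : ℝ, (G x).im = 0) (hne : ∀ z : ℂ, z.im ≠ 0 → (G z).im ≠ 0) :
    ∀ z : ℂ, 0 < z.im → 0 < (G z).im := by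
  obtain ⟨c, -, hc⟩ := exists_hasDerivAt_eq_slope (fun x : ℝ => (G x).re)
    (fun x : ℝ => (deriv G x).re) (zero_lt_one (α := ℝ))
    (Complex.continuous_re.comp (hG.continuous.comp Complex.continuous_ofReal)).continuousOn
    (fun x _ => (hG x).hasDerivAt.real_of_complex)
  have h01 : G ((1:ℝ):ℂ) = G ((0:ℝ):ℂ) + 1 := by simpa using hp 0
  have hc1 : (deriv G c).re = 1 := by rw [hc, h01]; simp
  -- positivity at one point
  have hpt : ∃ z : ℂ, 0 < z.im ∧ 0 < (G z).im := by
    have h1 : HasDerivAt (fun w : ℂ => -Complex.I * G (c + w * Complex.I)) (deriv G c) ((0:ℝ):ℂ) := by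
      have hi : HasDerivAt (fun w : ℂ => (c:ℂ) + w * Complex.I) Complex.I ((0:ℝ):ℂ) := by
        simpa using ((hasDerivAt_id ((0:ℝ):ℂ)).mul_const Complex.I).const_add (c:ℂ)
      have hg : HasDerivAt G (deriv G c) ((c:ℂ) + ((0:ℝ):ℂ) * Complex.I) := by
        simpa using (hG c).hasDerivAt
      have := (HasDerivAt.comp (h := fun w : ℂ => (c:ℂ) + w * Complex.I) ((0:ℝ):ℂ) hg hi).const_mul (-Complex.I)
      refine this.congr_deriv ?_
      linear_combination (-deriv G c) * Complex.I_mul_I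
    have h2 := h1.real_of_complex
    rw [hc1] at h2
    have h3 := hasDerivAt_iff_tendsto_slope_zero.1 h2
    have h4 := (h3.mono_left (nhdsWithin_mono 0
      (show Set.Ioi (0:ℝ) ⊆ {0}ᶜ from fun x hx => ne_of_gt hx))).eventually
      (lt_mem_nhds (zero_lt_one (α := ℝ)))
    obtain ⟨t, ht, ht0⟩ := (h4.and self_mem_nhdsWithin).exists
    have ht0 : 0 < t := ht0
    refine ⟨c + t * Complex.I, by simpa using ht0, ?_⟩
    have h5 := hr c
    simp [h5] at ht
    exact (pos_iff_pos_of_mul_pos ht).1 (by positivity)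
  obtain ⟨z₀, hz₀, hGz₀⟩ := hpt
  intro z hz
  by_contra hn
  push Not at hn
  have hconn : IsPreconnected {z : ℂ | 0 < z.im} := (convex_halfSpace_im_gt 0).isPreconnected
  obtain ⟨w, hw, hw0⟩ := hconn.intermediate_value hz hz₀
    (Complex.continuous_im.comp hG.continuous).continuousOn ⟨hn, hGz₀.le⟩
  exact hne w (ne_of_gt hw) hw0


/-- Herman's lemma: if a nonconstant 1-periodic `φ : ℝ → ℝ` extends to an entire
function on `ℂ` (e.g. a nonconstant trigonometric polynomial), then for all
coprime `p, q` with `q ≥ 1`, all `b ∈ (0,1]` and all `ω`, the `q`-th iterate of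
`x ↦ x + ω + b φ(x)` is not the translation by `p`; i.e. `φ` is never pinching. -/
theorem stmt5 (φ : ℝ → ℝ) (hper : ∀ x, φ (x + 1) = φ x)
    (hnc : ∃ x y : ℝ, φ x ≠ φ y)
    (hF : ∃ F : ℂ → ℂ, Differentiable ℂ F ∧ ∀ x : ℝ, F x = (φ x : ℂ)) :
    ∀ (p : ℤ) (q : ℕ), 1 ≤ q → Int.gcd p q = 1 →
      ∀ b : ℝ, 0 < b → b ≤ 1 → ∀ ω : ℝ,
        (fun x => x + ω + b * φ x)^[q] ≠ fun x => x + (p : ℝ) := by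
  rintro p q hq - b hb - ω heq
  obtain ⟨F, hF, hFφ⟩ := hF
  have ident : ∀ A B : ℂ → ℂ, Differentiable ℂ A → Differentiable ℂ B →
      (∀ x : ℝ, A x = B x) → ∀ z, A z = B z := by
    intro A B hA hB hAB z
    have hA' : AnalyticOnNhd ℂ A Set.univ := fun z _ => hA.analyticAt z
    have hB' : AnalyticOnNhd ℂ B Set.univ := fun z _ => hB.analyticAt z
    refine congrFun (hA'.eq_of_frequently_eq (z₀ := 0) hB' ?_) z
    have ht : Filter.Tendsto (fun x : ℝ => (x : ℂ)) (nhdsWithin 0 {0}ᶜ) (nhdsWithin 0 {0}ᶜ) := by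
      apply tendsto_nhdsWithin_of_tendsto_nhds_of_eventually_within
      · exact (by simpa using Complex.continuous_ofReal.tendsto 0 :
          Filter.Tendsto (fun x : ℝ => (x : ℂ)) (nhds 0) (nhds 0)).mono_left nhdsWithin_le_nhds
      · filter_upwards [self_mem_nhdsWithin] with x hx
        simpa using hx
    exact ht.frequently (Filter.Frequently.of_forall hAB)
  have hFper : ∀ z, F (z + 1) = F z := by
    refine ident _ _ (hF.comp (differentiable_id.add_const 1)) hF ?_
    intro x
    have := hFφ (x + 1)
    push_cast at this
    simp [this, hper, hFφ]
  set f : ℝ → ℝ := fun x => x + ω + b * φ x with hf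
  set G : ℂ → ℂ := fun z => z + ω + b * F z with hG
  have hGd : Differentiable ℂ G := by rw [hG]; fun_prop
  have hGp : ∀ z, G (z + 1) = G z + 1 := by intro z; simp only [hG, hFper]; ring
  have hGf : ∀ x : ℝ, G x = (f x : ℂ) := by intro x; simp [hG, hf, hFφ]
  have hGn : ∀ n : ℕ, ∀ x : ℝ, G^[n] x = ((f^[n] x : ℝ) : ℂ) := by
    intro n
    induction n with
    | zero => intro x; simp
    | succ n ih => intro x; rw [Function.iterate_succ_apply, hGf, ih, Function.iterate_succ_apply]
  have hGdn : ∀ n : ℕ, Differentiable ℂ (G^[n]) := fun n => hGd.iterate n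
  have hGpn : ∀ n : ℕ, ∀ z, G^[n] (z + 1) = G^[n] z + 1 := by
    intro n
    induction n with
    | zero => intro x; simp
    | succ n ih => intro x; rw [Function.iterate_succ_apply, hGp, ih, Function.iterate_succ_apply]
  have hGq : ∀ z, G^[q] z = z + ((p : ℝ) : ℂ) := by
    refine ident _ _ (hGdn q) (differentiable_id.add_const _) ?_
    intro x
    rw [hGn, heq]; simp
  obtain ⟨k, rfl⟩ : ∃ k, q = k + 1 := ⟨q - 1, by omega⟩
  have hKG : ∀ z, G^[k] (G z) = z + ((p : ℝ) : ℂ) := fun z => by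
    rw [← Function.iterate_succ_apply, hGq]
  have hpos := aux_pos G hGd hGp (fun x => by rw [hGf]; simp) (by
    intro z hz h0
    have h1 : G z = ((G z).re : ℂ) := by
      apply Complex.ext <;> simp [h0]
    have h2 := hKG z
    rw [h1, hGn] at h2
    have h3 := congrArg Complex.im h2
    simp at h3
    exact hz h3.symm)
  have ht := aux_proper G _ (hGdn k).continuous (hGpn k) p hKG hpos
  have hle := aux_schwarz G hGd hGp hpos ht
  have hlen : ∀ n : ℕ, ∀ z : ℂ, 0 < z.im → z.im ≤ (G^[n] z).im := by
    intro n
    induction n with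
    | zero => intro z _; simp
    | succ n ih =>
      intro z hz
      rw [Function.iterate_succ_apply]
      exact (hle z hz).trans (ih _ (hpos z hz))
  have hFim : ∀ z : ℂ, 0 < z.im → (F z).im = 0 := by
    intro z hz
    have h1 := hle z hz
    have h2 := hlen k _ (hpos z hz)
    rw [hKG] at h2
    have h3 : (G z).im = z.im := le_antisymm (by simpa using h2) h1
    simp [hG] at h3
    exact h3.resolve_left hb.ne'
  have hUo : IsOpen {z : ℂ | 0 < z.im} := isOpen_lt continuous_const Complex.continuous_im
  have hI : Complex.I ∈ {z : ℂ | 0 < z.im} := by simp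
  have hFa : ∀ s : Set ℂ, AnalyticOnNhd ℂ F s := fun s z _ => hF.analyticAt z
  obtain ⟨C, hC⟩ := AnalyticOnNhd.eq_const_of_im_eq_const (c₀ := 0) (hFa _) hFim hUo
    ⟨⟨_, hI⟩, (convex_halfSpace_im_gt 0).isPreconnected⟩
  have hFc : F = fun _ => C := by
    refine (hFa Set.univ).eq_of_eventuallyEq (fun _ _ => analyticAt_const) (z₀ := Complex.I) ?_
    filter_upwards [hUo.mem_nhds hI] with z hz using hC z hz
  obtain ⟨x, y, hxy⟩ := hnc
  apply hxy
  have hx := hFφ x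
  have hy := hFφ y
  rw [hFc] at hx hy
  exact_mod_cast hx.symm.trans hy
end

section
/- Let r ≥ 1 be a natural number and let φ : ℝ → ℝ be r-times continuously differentiable and 1-periodic with φ'(x) ≥ −1 for all x and min φ' = −1. Let p, q be coprime integers with q ≥ 1, let n ≥ 2 be a natural number, and let ε > 0. Then there exists ψ : ℝ → ℝ, r-times continuously differentiable and 1-periodic, with ψ'(x) ≥ −1 for all x and min ψ' = −1, such that ∑_{i=0}^r sup_x |iteratedDeriv i (φ − ψ)(x)| < ε and for every b ∈ [1/n, 1] and every ω ∈ ℝ the q-th iterate of the map x ↦ x + ω + b·ψ(x) is not equal to x ↦ x + p. -/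
noncomputable def ee (k : ℤ) (x : ℝ) : ℂ := Complex.exp (2 * Real.pi * Complex.I * k * x)

noncomputable def VV : Submodule ℂ (ℝ → ℂ) := Submodule.span ℂ (Set.range ee)

lemma ee_mem (k : ℤ) : ee k ∈ VV := Submodule.subset_span ⟨k, rfl⟩

lemma const_mem (c : ℂ) : (fun _ => c) ∈ VV := by
  have h := VV.smul_mem c (ee_mem 0)
  convert h using 1
  funext x
  simp [ee]

lemma VV_induct {P : (ℝ → ℂ) → Prop} (h1 : ∀ k, P (ee k))
    (h2 : ∀ f g, P f → P g → P (f + g)) (h3 : ∀ (c : ℂ) f, P f → P (c • f))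
    {g : ℝ → ℂ} (hg : g ∈ VV) : P g := by
  refine Submodule.span_induction (p := fun g _ => P g) ?_ ?_ ?_ ?_ hg
  · rintro _ ⟨k, rfl⟩; exact h1 k
  · have := h3 0 _ (h1 0)
    rwa [zero_smul] at this
  · intro x y _ _ hx hy; exact h2 x y hx hy
  · intro c x _ hx; exact h3 c x hx

lemma VV_conj {g : ℝ → ℂ} (hg : g ∈ VV) : (fun x => (starRingEnd ℂ) (g x)) ∈ VV := by
  refine VV_induct (P := fun g => (fun x => (starRingEnd ℂ) (g x)) ∈ VV) ?_ ?_ ?_ hg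
  · intro k
    convert ee_mem (-k) using 1
    funext x
    simp only [ee]
    rw [← Complex.exp_conj]
    congr 1
    have h2 : (starRingEnd ℂ) 2 = 2 := Complex.conj_ofNat 2
    simp [h2]
  · intro f g hf hg
    convert VV.add_mem hf hg using 1
    funext x; simp
  · intro c f hf
    convert VV.smul_mem ((starRingEnd ℂ) c) hf using 1
    funext x; simp

lemma VV_re {g : ℝ → ℂ} (hg : g ∈ VV) : (fun x => ((g x).re : ℂ)) ∈ VV := by
  convert VV.smul_mem (1/2 : ℂ) (VV.add_mem hg (VV_conj hg)) using 1
  funext x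
  simp only [Pi.smul_apply, Pi.add_apply, smul_eq_mul, Complex.add_conj]
  push_cast; ring

lemma VV_per {g : ℝ → ℂ} (hg : g ∈ VV) : ∀ x, g (x + 1) = g x := by
  refine VV_induct (P := fun g => ∀ x, g (x + 1) = g x) ?_ ?_ ?_ hg
  · intro k x
    simp only [ee]
    rw [Complex.exp_eq_exp_iff_exists_int]
    exact ⟨k, by push_cast; ring⟩
  · intro f g hf hg x; simp [hf, hg]
  · intro c f hf x; simp [hf]

lemma ee_hasDeriv (k : ℤ) (x : ℝ) :
    HasDerivAt (ee k) (ee k x * (2 * Real.pi * Complex.I * k)) x := by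
  have h : HasDerivAt (fun z : ℂ => Complex.exp (2 * Real.pi * Complex.I * k * z))
      (Complex.exp (2 * Real.pi * Complex.I * k * x) * (2 * Real.pi * Complex.I * k)) (x : ℂ) := by
    have := ((hasDerivAt_id (x : ℂ)).const_mul (2 * Real.pi * Complex.I * k : ℂ)).cexp
    simpa using this
  exact h.comp_ofReal

lemma VV_smooth {g : ℝ → ℂ} (hg : g ∈ VV) (n : ℕ) : ContDiff ℝ n g := by
  refine VV_induct (P := fun g => ContDiff ℝ n g) ?_ ?_ ?_ hg
  · intro k
    unfold ee
    have : ContDiff ℝ n (fun x : ℝ => (x : ℂ)) := Complex.ofRealCLM.contDiff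
    exact (contDiff_const.mul this).cexp
  · intro f g hf hg; exact hf.add hg
  · intro c f hf; exact hf.const_smul c

lemma VV_anti {g : ℝ → ℂ} (hg : g ∈ VV) :
    ∃ a : ℂ, ∃ G ∈ VV, ∀ x, HasDerivAt G (g x - a) x := by
  refine VV_induct (P := fun g => ∃ a : ℂ, ∃ G ∈ VV, ∀ x, HasDerivAt G (g x - a) x) ?_ ?_ ?_ hg
  · intro k
    by_cases hk : k = 0
    · refine ⟨1, fun _ => 0, const_mem 0, fun x => ?_⟩
      have : ee k x - 1 = 0 := by simp [ee, hk]
      rw [this]; exact hasDerivAt_const _ _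
    · refine ⟨0, _, VV.smul_mem (2 * Real.pi * Complex.I * k)⁻¹ (ee_mem k), fun x => ?_⟩
      have h := (ee_hasDeriv k x).const_smul (2 * Real.pi * Complex.I * k : ℂ)⁻¹
      refine h.congr_deriv ?_
      have h1 : (2 * Real.pi * Complex.I * k : ℂ) ≠ 0 := by
        have : (k : ℂ) ≠ 0 := by exact_mod_cast hk
        have h2 := Complex.two_pi_I_ne_zero
        exact mul_ne_zero h2 this
      rw [smul_eq_mul, mul_comm (ee k x), inv_mul_cancel_left₀ h1, sub_zero]
  · rintro f g ⟨a, F, hF, hF'⟩ ⟨b, G, hG, hG'⟩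
    refine ⟨a + b, F + G, VV.add_mem hF hG, fun x => ?_⟩
    refine ((hF' x).add (hG' x)).congr_deriv ?_
    simp only [Pi.add_apply]; ring
  · rintro c f ⟨a, F, hF, hF'⟩
    refine ⟨c * a, c • F, VV.smul_mem c hF, fun x => ?_⟩
    refine ((hF' x).const_smul c).congr_deriv ?_
    simp only [Pi.smul_apply, smul_eq_mul]; ring

open Polynomial in
lemma VV_poly {g : ℝ → ℂ} (hg : g ∈ VV) :
    ∃ N : ℕ, ∃ P : ℂ[X], ∀ x : ℝ, g x = Complex.exp (-(2 * Real.pi * Complex.I * x)) ^ N *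
      P.eval (Complex.exp (2 * Real.pi * Complex.I * x)) := by
  refine VV_induct (P := fun g => ∃ N : ℕ, ∃ P : ℂ[X], ∀ x : ℝ,
    g x = Complex.exp (-(2 * Real.pi * Complex.I * x)) ^ N *
      P.eval (Complex.exp (2 * Real.pi * Complex.I * x))) ?_ ?_ ?_ hg
  · intro k
    refine ⟨k.natAbs, X ^ (k + k.natAbs).toNat, fun x => ?_⟩
    simp only [eval_pow, eval_X, ee, ← Complex.exp_nat_mul, ← Complex.exp_add]
    congr 1
    have : (((k + k.natAbs).toNat : ℕ) : ℂ) = k + k.natAbs := by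
      have h : (((k + k.natAbs).toNat : ℕ) : ℤ) = k + k.natAbs := by omega
      have h' := congrArg (Int.cast (R := ℂ)) h
      rw [Int.cast_add, Int.cast_natCast, Int.cast_natCast] at h'
      exact h'
    rw [this]; ring
  · rintro f g ⟨N, P, h⟩ ⟨M, Q, h'⟩
    refine ⟨N + M, X ^ M * P + X ^ N * Q, fun x => ?_⟩
    simp only [Pi.add_apply, h, h', eval_add, eval_mul, eval_pow, eval_X]
    have h1 : Complex.exp (-(2 * Real.pi * Complex.I * x)) *
      Complex.exp (2 * Real.pi * Complex.I * x) = 1 := by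
      rw [← Complex.exp_add]; simp
    generalize Complex.exp (-(2 * Real.pi * Complex.I * x)) = u at *
    generalize Complex.exp (2 * Real.pi * Complex.I * x) = w at *
    have hN : u ^ N * w ^ N = 1 := by rw [← mul_pow, h1, one_pow]
    have hM : u ^ M * w ^ M = 1 := by rw [← mul_pow, h1, one_pow]
    rw [pow_add]
    linear_combination (-u^N * eval w P) * hM - (u^M * eval w Q) * hN
  · rintro c f ⟨N, P, h⟩
    refine ⟨N, C c * P, fun x => ?_⟩
    simp [h]; ring

lemma base_approx (φ : ℝ → ℝ) (hφ : Continuous φ) (hper : ∀ x, φ (x + 1) = φ x) (ε : ℝ)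
    (hε : 0 < ε) : ∃ T : ℝ → ℝ, (fun x => (T x : ℂ)) ∈ VV ∧ ∀ x, |φ x - T x| ≤ ε := by
  have : Fact ((0:ℝ) < 1) := ⟨one_pos⟩
  have hp : Function.Periodic (fun x => (φ x : ℂ)) 1 := fun x => by simp [hper]
  let f : C(AddCircle (1:ℝ), ℂ) := ⟨hp.lift, by
    refine continuous_coinduced_dom.mpr ?_
    exact Complex.continuous_ofReal.comp hφ⟩
  have hf : f ∈ (Submodule.span ℂ (Set.range (@fourier (1:ℝ)))).topologicalClosure := by
    rw [span_fourier_closure_eq_top]; trivial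
  have hf' : f ∈ closure (Submodule.span ℂ (Set.range (@fourier (1:ℝ))) : Set C(AddCircle (1:ℝ), ℂ)) := hf
  obtain ⟨g, hg, hd⟩ := Metric.mem_closure_iff.mp hf' ε hε
  have hgV : (fun x : ℝ => g (x : AddCircle (1:ℝ))) ∈ VV := by
    refine Submodule.span_induction (p := fun g _ => (fun x : ℝ => g (x : AddCircle (1:ℝ))) ∈ VV)
      ?_ ?_ ?_ ?_ hg
    · rintro _ ⟨k, rfl⟩
      convert ee_mem k using 1
      funext x
      rw [fourier_coe_apply]; simp [ee]
    · exact const_mem 0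
    · intro x y _ _ hx hy; exact VV.add_mem hx hy
    · intro c x _ hx; exact VV.smul_mem c hx
  refine ⟨fun x => (g (x : AddCircle (1:ℝ))).re, VV_re hgV, fun x => ?_⟩
  have h1 := (ContinuousMap.dist_apply_le_dist (f := f) (g := g) (x : AddCircle (1:ℝ))).trans hd.le
  have h2 : f (x : AddCircle (1:ℝ)) = (φ x : ℂ) := rfl
  rw [h2, dist_eq_norm] at h1
  have h3 := (Complex.abs_re_le_norm _).trans h1
  simpa using h3

lemma ofReal_re_smooth {T : ℝ → ℝ} (hT : (fun x => (T x : ℂ)) ∈ VV) (n : ℕ) : ContDiff ℝ n T := by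
  have h := Complex.reCLM.contDiff.comp (VV_smooth hT n)
  exact h

lemma VV_per_re {T : ℝ → ℝ} (hT : (fun x => (T x : ℂ)) ∈ VV) : ∀ x, T (x + 1) = T x := by
  intro x
  have := VV_per hT x
  exact_mod_cast this

lemma per_iter {φ : ℝ → ℝ} (hper : ∀ x, φ (x + 1) = φ x) (i : ℕ) :
    ∀ x, iteratedDeriv i φ (x + 1) = iteratedDeriv i φ x := by
  intro x
  have h := congrFun (iteratedDeriv_comp_add_const i φ 1) x
  rw [← h]
  congr 1
  funext y; exact hper y

lemma per_deriv {φ : ℝ → ℝ} (hper : ∀ x, φ (x + 1) = φ x) :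
    ∀ x, deriv φ (x + 1) = deriv φ x := by
  simpa [iteratedDeriv_one] using per_iter hper 1

lemma approx (r : ℕ) : ∀ (φ : ℝ → ℝ) (_ : ContDiff ℝ r φ) (_ : ∀ x, φ (x + 1) = φ x) (ε : ℝ)
    (_ : 0 < ε), ∃ T : ℝ → ℝ, (fun x => (T x : ℂ)) ∈ VV ∧
      ∀ i ≤ r, ∀ x, |iteratedDeriv i (fun y => φ y - T y) x| ≤ ε := by
  induction r with
  | zero =>
    intro φ hφ hper ε hε
    obtain ⟨T, hT, h⟩ := base_approx φ hφ.continuous hper ε hε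
    refine ⟨T, hT, fun i hi x => ?_⟩
    obtain rfl : i = 0 := by omega
    simpa using h x
  | succ r ih =>
    intro φ hφ hper ε hε
    have hφd : Differentiable ℝ φ := hφ.differentiable (by simp)
    have hφ' : ContDiff ℝ r (deriv φ) := by
      have h1 : ContDiff ℝ ((r : WithTop ℕ∞) + 1) φ := by exact_mod_cast hφ
      exact (contDiff_succ_iff_deriv.mp h1).2.2
    obtain ⟨T0, hT0, h0⟩ := ih (deriv φ) hφ' (per_deriv hper) (ε / 2) (by positivity)
    obtain ⟨a, G, hG, hG'⟩ := VV_anti hT0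
    have hGr : ∀ x, HasDerivAt (fun x => (G x).re) (T0 x - a.re) x := by
      intro x
      have := (Complex.reCLM.hasFDerivAt (x := G x)).comp_hasDerivAt x (hG' x)
      refine this.congr_deriv ?_
      simp
    have hGV := VV_re hG
    have hGp := VV_per_re hGV
    set c := φ 0 - (G 0).re with hc
    have hTV : (fun x => (((G x).re + c : ℝ) : ℂ)) ∈ VV := by
      convert VV.add_mem hGV (const_mem (c : ℂ)) using 1
      funext x; simp
    have hd : ∀ x, HasDerivAt (fun x => φ x - ((G x).re + c)) (deriv φ x - T0 x + a.re) x := by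
      intro x
      refine ((hφd x).hasDerivAt.sub ((hGr x).add_const c)).congr_deriv ?_
      ring
    have hb0 : ∀ x, |deriv φ x - T0 x| ≤ ε / 2 := by
      intro x; simpa using h0 0 (Nat.zero_le _) x
    have hz0 : φ 0 - ((G 0).re + c) = 0 := by rw [hc]; ring
    have hz1 : φ 1 - ((G 1).re + c) = 0 := by
      have e1 := hper 0
      have e2 := hGp 0
      rw [zero_add] at e1 e2
      rw [e1, e2, hz0]
    have ha : |a.re| ≤ ε / 2 := by
      obtain ⟨y, _, hy⟩ := exists_hasDerivAt_eq_zero (f := fun x => φ x - ((G x).re + c))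
        (a := 0) (b := 1) one_pos
        (fun x _ => (hd x).continuousAt.continuousWithinAt) (by rw [hz0, hz1]) (fun x _ => hd x)
      have h1 := hb0 y
      have h2 : deriv φ y - T0 y = -a.re := by linarith
      rwa [h2, abs_neg] at h1
    have hdb : ∀ x, |deriv φ x - T0 x + a.re| ≤ ε := by
      intro x
      have := abs_add_le (deriv φ x - T0 x) a.re
      linarith [hb0 x]
    refine ⟨fun x => (G x).re + c, hTV, fun i hi x => ?_⟩
    have hder : deriv (fun x => φ x - ((G x).re + c)) = fun x => a.re + (deriv φ x - T0 x) := by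
      funext x; rw [(hd x).deriv]; ring
    match i, hi with
    | 0, _ =>
      have hp : Function.Periodic (fun x => φ x - ((G x).re + c)) 1 := by
        intro y
        have e1 := hper y
        have e2 := hGp y
        simp only [e1, e2]
      obtain ⟨y, hy, hxy⟩ := hp.exists_mem_Ico₀ one_pos x
      rw [iteratedDeriv_zero, hxy]
      have := Convex.norm_image_sub_le_of_norm_hasDerivWithin_le (s := Set.univ) (x := 0) (y := y)
        (fun x _ => (hd x).hasDerivWithinAt) (fun x _ => hdb x) convex_univ trivial trivial
      simp only [hz0, sub_zero, Real.norm_eq_abs] at this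
      refine this.trans ?_
      rw [abs_of_nonneg hy.1]
      nlinarith [hy.2]
    | 1, _ =>
      rw [iteratedDeriv_one, hder]
      have := hdb x
      rwa [add_comm] at this
    | (j + 2), hi =>
      rw [iteratedDeriv_succ', hder, iteratedDeriv_const_add (by omega)]
      exact (h0 (j + 1) (by omega) x).trans (by linarith)

open Polynomial in
lemma exists_root (N : ℕ) (Q : ℂ[X]) (h1 : Q.coeff N = 1) (h2 : Q ≠ X ^ N) :
    ∃ w : ℂ, w ≠ 0 ∧ Q.eval w = 0 := by
  by_contra! hcon
  have hQ : Q ≠ 0 := by rintro rfl; simp at h1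
  have hs := (IsAlgClosed.splits Q).eq_prod_roots
  have hr : Q.roots = Multiset.replicate (Multiset.card Q.roots) 0 := by
    rw [Multiset.eq_replicate]
    refine ⟨rfl, fun b hb => ?_⟩
    by_contra hb0
    exact hcon b hb0 (Polynomial.isRoot_of_mem_roots hb)
  rw [hr] at hs
  simp only [Multiset.map_replicate, Multiset.prod_replicate, map_zero, sub_zero] at hs
  generalize Multiset.card Q.roots = m at hs
  generalize Q.leadingCoeff = l at hs
  subst hs
  rw [coeff_C_mul, coeff_X_pow] at h1
  split_ifs at h1 with h
  · subst h
    apply h2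
    rw [mul_one] at h1
    simp [h1]
  · simp at h1

open Polynomial in
lemma no_pinch (ψ : ℝ → ℝ) (hψ : (fun x => (ψ x : ℂ)) ∈ VV) (x₀ : ℝ) (hx : deriv ψ x₀ = -1)
    (b ω : ℝ) (hb : b ≠ 0) (q : ℕ) (hq : 1 ≤ q) (p : ℤ) :
    (fun x => x + ω + b * ψ x)^[q] ≠ fun x => x + (p : ℝ) := by
  intro hcon
  obtain ⟨N, P, hP⟩ := VV_poly hψ
  set τ : ℂ := 2 * Real.pi * Complex.I with hτ
  have hτ0 : τ ≠ 0 := Complex.two_pi_I_ne_zero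
  set F : ℂ → ℂ := fun z => z + ω + b * (Complex.exp (-(τ * z)) ^ N * P.eval (Complex.exp (τ * z)))
    with hF
  have hFr : ∀ x : ℝ, F x = ((x + ω + b * ψ x : ℝ) : ℂ) := by
    intro x
    have := hP x
    simp only [hF]
    rw [← this]; push_cast; ring
  set Q : ℂ[X] := X ^ N + C (b * τ) * (X * derivative P - C (N : ℂ) * P) with hQ
  have hF' : ∀ z, HasDerivAt F (Complex.exp (-(τ * z)) ^ N * Q.eval (Complex.exp (τ * z))) z := by
    intro z
    have e1 : HasDerivAt (fun z => Complex.exp (τ * z)) (Complex.exp (τ * z) * τ) z := by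
      simpa using ((hasDerivAt_id z).const_mul τ).cexp
    have e2 : HasDerivAt (fun z => Complex.exp (-(τ * z))) (Complex.exp (-(τ * z)) * (-τ)) z := by
      simpa using ((hasDerivAt_id z).const_mul τ).neg.cexp
    have e3 := (P.hasDerivAt (Complex.exp (τ * z))).comp z e1
    have e4 := ((hasDerivAt_id z).add_const (ω : ℂ)).add (((e2.pow N).mul e3).const_mul (b : ℂ))
    refine e4.congr_deriv ?_
    have h1 : Complex.exp (-(τ * z)) * Complex.exp (τ * z) = 1 := by
      rw [← Complex.exp_add]; simp
    simp only [hQ, eval_add, eval_mul, eval_pow, eval_X, eval_C, eval_sub, Function.comp,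
      Pi.pow_apply]
    generalize Complex.exp (-(τ * z)) = u at *
    generalize Complex.exp (τ * z) = w at *
    have hN : u ^ N * w ^ N = 1 := by rw [← mul_pow, h1, one_pow]
    rcases N with _ | N
    · simp; ring
    · simp only [Nat.add_sub_cancel]
      linear_combination (-1 : ℂ) * hN
  have hFd : Differentiable ℂ F := fun z => (hF' z).differentiableAt
  have hQN : Q.coeff N = 1 := by
    simp only [hQ, coeff_add, coeff_X_pow, coeff_C_mul, coeff_sub, if_true]
    have : (X * derivative P).coeff N = N * P.coeff N := by
      rcases N with _ | N
      · simp
      · rw [coeff_X_mul, coeff_derivative]; push_cast; ring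
    rw [this]; ring
  have hQne : Q ≠ X ^ N := by
    intro h
    have hψd : DifferentiableAt ℝ ψ x₀ := (ofReal_re_smooth hψ 1).differentiable (by simp) x₀
    have e1 : HasDerivAt (fun x : ℝ => x + ω + b * ψ x) (1 + b * (-1)) x₀ := by
      rw [← hx]
      exact ((hasDerivAt_id x₀).add_const ω).add (hψd.hasDerivAt.const_mul b)
    have e2 := (hF' x₀).comp_ofReal
    have e3 := e1.ofReal_comp
    have e4 : (fun y : ℝ => F y) = fun y : ℝ => ((y + ω + b * ψ y : ℝ) : ℂ) := funext hFr
    rw [e4] at e2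
    have e5 := e2.unique e3
    rw [h, eval_pow, eval_X, ← mul_pow, ← Complex.exp_add] at e5
    simp at e5
    exact hb e5
  obtain ⟨w, hw, hQw⟩ := exists_root N Q hQN hQne
  set z₀ := Complex.log w / τ
  have hz : Complex.exp (τ * z₀) = w := by
    rw [mul_div_cancel₀ _ hτ0, Complex.exp_log hw]
  have hFz := hF' z₀
  rw [hz, hQw, mul_zero] at hFz
  have hit : ∀ k : ℕ, ∀ x : ℝ, F^[k] x = (((fun x => x + ω + b * ψ x)^[k] x : ℝ) : ℂ) := by
    intro k
    induction k with
    | zero => intro x; rfl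
    | succ k ih => intro x; rw [Function.iterate_succ_apply, Function.iterate_succ_apply, hFr, ih]
  have hitd : ∀ k : ℕ, Differentiable ℂ F^[k] := fun k => hFd.iterate k
  have hglob : F^[q] = fun z => z + (p : ℂ) := by
    have a1 : AnalyticOnNhd ℂ F^[q] Set.univ := fun z _ => (hitd q).analyticAt z
    have a2 : AnalyticOnNhd ℂ (fun z : ℂ => z + (p : ℂ)) Set.univ :=
      fun z _ => (show Differentiable ℂ (fun z : ℂ => z + (p : ℂ)) by fun_prop).analyticAt z
    refine a1.eq_of_frequently_eq a2 (z₀ := 0) ?_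
    have ht : Filter.Tendsto (fun x : ℝ => (x : ℂ)) (nhdsWithin 0 {0}ᶜ) (nhdsWithin 0 {0}ᶜ) := by
      refine tendsto_nhdsWithin_iff.mpr ⟨?_, ?_⟩
      · have := (Complex.continuous_ofReal.tendsto 0).mono_left (nhdsWithin_le_nhds (s := {0}ᶜ))
        simpa using this
      · filter_upwards [self_mem_nhdsWithin] with x hx
        simpa using hx
    refine ht.frequently (Filter.Eventually.frequently (Filter.Eventually.of_forall fun x => ?_))
    rw [hit, hcon]; push_cast; rfl
  obtain ⟨k, rfl⟩ : ∃ k, q = k + 1 := ⟨q - 1, by omega⟩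
  have d1 := ((hitd k) (F z₀)).hasDerivAt.comp z₀ hFz
  rw [← Function.iterate_succ, hglob, mul_zero] at d1
  have d2 := (hasDerivAt_id z₀).add_const (p : ℂ)
  exact zero_ne_one (d1.unique d2)

theorem stmt6 (r : ℕ) (hr : 1 ≤ r) (φ : ℝ → ℝ)
    (hφ : ContDiff ℝ r φ) (hper : ∀ x, φ (x + 1) = φ x)
    (hd1 : ∀ x : ℝ, -1 ≤ deriv φ x) (hd2 : ∃ x₀ : ℝ, deriv φ x₀ = -1)
    (p : ℤ) (q : ℕ) (hq : 1 ≤ q) (hpq : Int.gcd p q = 1)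
    (n : ℕ) (hn : 2 ≤ n) (ε : ℝ) (hε : 0 < ε) :
    ∃ ψ : ℝ → ℝ, ContDiff ℝ r ψ ∧ (∀ x, ψ (x + 1) = ψ x) ∧
      (∀ x : ℝ, -1 ≤ deriv ψ x) ∧ (∃ x₀ : ℝ, deriv ψ x₀ = -1) ∧
      (∑ i ∈ Finset.range (r + 1),
        ⨆ x : ℝ, |iteratedDeriv i (fun y => φ y - ψ y) x|) < ε ∧
      ∀ b : ℝ, 1 / (n : ℝ) ≤ b → b ≤ 1 → ∀ ω : ℝ,
        (fun x => x + ω + b * ψ x)^[q] ≠ fun x => x + (p : ℝ) := by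
  have hbd : ∀ i : ℕ, ∃ M : ℝ, 0 ≤ M ∧ (i ≤ r → ∀ x, |iteratedDeriv i φ x| ≤ M) := by
    intro i
    by_cases hi : i ≤ r
    · have hc : Continuous (iteratedDeriv i φ) := hφ.continuous_iteratedDeriv i (by exact_mod_cast hi)
      have hp : Function.Periodic (iteratedDeriv i φ) 1 := per_iter hper i
      obtain ⟨M, hM⟩ := (hp.isBounded_of_continuous one_ne_zero hc).exists_norm_le
      exact ⟨M, (norm_nonneg _).trans (hM _ ⟨0, rfl⟩), fun _ x => hM _ ⟨x, rfl⟩⟩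
    · exact ⟨0, le_rfl, fun h => absurd h hi⟩
  choose B hB0 hB using hbd
  set M := ∑ i ∈ Finset.range (r + 1), B i with hM
  have hM0 : 0 ≤ M := Finset.sum_nonneg fun i _ => hB0 i
  have hMb : ∀ i ≤ r, ∀ x, |iteratedDeriv i φ x| ≤ M := fun i hi x =>
    (hB i hi x).trans (Finset.single_le_sum (f := B) (fun i _ => hB0 i)
      (Finset.mem_range.mpr (by omega)))
  obtain ⟨δ, hδ0, hδ1, hδ2⟩ : ∃ δ : ℝ, 0 < δ ∧ δ ≤ 1 / 2 ∧ (r + 1) * (δ * (2 * M + 3)) < ε := by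
    refine ⟨min (1 / 2) (ε / (2 * ((r + 1) * (2 * M + 3)))), by positivity, min_le_left _ _, ?_⟩
    have h1 := min_le_right (1 / 2 : ℝ) (ε / (2 * ((r + 1) * (2 * M + 3))))
    have hK : 0 < (r + 1 : ℝ) * (2 * M + 3) := by positivity
    calc _ = min (1 / 2) (ε / (2 * ((r + 1) * (2 * M + 3)))) * ((r + 1 : ℝ) * (2 * M + 3)) := by ring
      _ ≤ ε / (2 * ((r + 1) * (2 * M + 3))) * ((r + 1 : ℝ) * (2 * M + 3)) := by gcongr
      _ = ε / 2 := by field_simp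
      _ < ε := by linarith
  obtain ⟨T, hT, hTa⟩ := approx r φ hφ hper δ hδ0
  have hTs : ContDiff ℝ r T := ofReal_re_smooth hT r
  have hTp := VV_per_re hT
  have hr' : (r : WithTop ℕ∞) ≠ 0 := by
    have : r ≠ 0 := by omega
    exact_mod_cast this
  have hTd : Differentiable ℝ T := hTs.differentiable hr'
  have hφd : Differentiable ℝ φ := hφ.differentiable hr'
  have hclose : ∀ x, |deriv φ x - deriv T x| ≤ δ := by
    intro x
    have := hTa 1 hr x
    rwa [iteratedDeriv_one, deriv_fun_sub (hφd x) (hTd x)] at this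
  obtain ⟨x₁, hx₁⟩ : ∃ x₁, ∀ x, deriv T x₁ ≤ deriv T x := by
    have hc : Continuous (deriv T) := (hTs.continuous_deriv (by exact_mod_cast hr))
    obtain ⟨x₁, _, h⟩ := isCompact_Icc.exists_isMinOn (s := Set.Icc (0:ℝ) 1) ⟨0, by simp⟩ hc.continuousOn
    refine ⟨x₁, fun x => ?_⟩
    have hp : Function.Periodic (deriv T) 1 := per_deriv hTp
    obtain ⟨y, hy, hxy⟩ := hp.exists_mem_Ico₀ one_pos x
    rw [hxy]
    exact h ⟨hy.1, hy.2.le⟩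
  obtain ⟨m, hm⟩ : ∃ m, m = -deriv T x₁ := ⟨_, rfl⟩
  have hm1 : m ≤ 1 + δ := by
    have := abs_le.mp (hclose x₁)
    have := hd1 x₁
    linarith
  have hm2 : 1 - δ ≤ m := by
    obtain ⟨x₀, hx₀⟩ := hd2
    have := abs_le.mp (hclose x₀)
    have := hx₁ x₀
    linarith
  have hmpos : 0 < m := by linarith
  have hs : |1 - m⁻¹| ≤ 2 * δ := by
    have : 1 - m⁻¹ = (m - 1) * m⁻¹ := by field_simp
    rw [this, abs_mul, abs_of_pos (inv_pos.mpr hmpos)]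
    have h1 : |m - 1| ≤ δ := abs_le.mpr ⟨by linarith, by linarith⟩
    have h2 : m⁻¹ ≤ 2 := by
      rw [inv_le_comm₀ hmpos two_pos]; linarith
    calc _ ≤ δ * 2 := by gcongr
      _ = _ := by ring
  have hder : ∀ x, deriv (fun y => m⁻¹ * T y) x = m⁻¹ * deriv T x := fun x =>
    deriv_const_mul _ (hTd x)
  have hV : (fun x => ((m⁻¹ * T x : ℝ) : ℂ)) ∈ VV := by
    convert VV.smul_mem ((m⁻¹ : ℝ) : ℂ) hT using 1
    funext x; simp
  have hmin : deriv (fun y => m⁻¹ * T y) x₁ = -1 := by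
    rw [hder, show deriv T x₁ = -m by linarith]; field_simp
  refine ⟨fun x => m⁻¹ * T x, contDiff_const.mul hTs, fun x => by simp only [hTp], ?_, ⟨x₁, hmin⟩,
    ?_, ?_⟩
  · intro x
    rw [← hmin, hder, hder]
    have := hx₁ x
    gcongr
  · refine lt_of_le_of_lt (Finset.sum_le_sum (g := fun _ => δ * (2 * M + 3)) fun i hi => ?_) ?_
    · have hi' : i ≤ r := by have := Finset.mem_range.mp hi; omega
      refine ciSup_le fun x => ?_
      have hφi : ContDiffAt ℝ i φ x := (hφ.of_le (by exact_mod_cast hi')).contDiffAt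
      have hTi : ContDiffAt ℝ i T x := (hTs.of_le (by exact_mod_cast hi')).contDiffAt
      have h1 := hTa i hi' x
      rw [iteratedDeriv_fun_sub hφi hTi] at h1
      rw [iteratedDeriv_fun_sub hφi (contDiffAt_const.mul hTi), iteratedDeriv_const_mul _ hTi]
      have h2 := hMb i hi' x
      generalize iteratedDeriv i φ x = A at *
      generalize iteratedDeriv i T x = D at *
      have h3 : |D| ≤ M + δ := by
        have := abs_sub_abs_le_abs_sub D A
        rw [abs_sub_comm] at this
        linarith
      have h4 : A - m⁻¹ * D = (A - D) + (1 - m⁻¹) * D := by ring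
      rw [h4]
      refine (abs_add_le _ _).trans ?_
      rw [abs_mul]
      have h5 : |1 - m⁻¹| * |D| ≤ (2 * δ) * (M + δ) := by gcongr
      nlinarith
    · rw [Finset.sum_const, Finset.card_range, nsmul_eq_mul]
      push_cast
      exact hδ2
  · intro b hb1 _ ω
    have hb : 0 < b := lt_of_lt_of_le (by positivity) hb1
    exact no_pinch _ hV x₁ hmin b ω hb.ne' q hq p
end

section
/- Let φ : ℝ → ℝ be Lipschitz and 1-periodic with essential infimum of deriv φ (with respect to Lebesgue measure) equal to −1. Let p, q be coprime integers with q ≥ 1, let n ≥ 2 be a natural number, and let ε > 0. Then there exists ψ : ℝ → ℝ, Lipschitz and 1-periodic, with essential infimum of deriv ψ equal to −1, such that sup_x |φ(x) − ψ(x)| + K(φ − ψ) < ε and for every b ∈ [1/n, 1] and every ω ∈ ℝ the q-th iterate of the map x ↦ x + ω + b·ψ(x) is not equal to x ↦ x + p. -/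
open MeasureTheory

/-- The least Lipschitz constant of `h : ℝ → ℝ`. -/
noncomputable def lipConst (h : ℝ → ℝ) : ℝ :=
  sInf {K : ℝ | 0 ≤ K ∧ ∀ x y : ℝ, |h x - h y| ≤ K * |x - y|}

lemma aux_iter_lip {f : ℝ → ℝ} {L : ℝ} (hL : 1 ≤ L)
    (hf : ∀ x y, |f x - f y| ≤ L * |x - y|) (k : ℕ) (x y : ℝ) :
    |f^[k] x - f^[k] y| ≤ L ^ k * |x - y| := by
  induction k with
  | zero => simp
  | succ k ih =>
    rw [Function.iterate_succ_apply', Function.iterate_succ_apply']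
    calc _ ≤ L * |f^[k] x - f^[k] y| := hf _ _
      _ ≤ L * (L ^ k * |x - y|) := by gcongr
      _ = _ := by ring

lemma aux_shift_int {f : ℝ → ℝ} (hf : ∀ x, f (x + 1) = f x + 1) (j : ℤ) (x : ℝ) :
    f (x + j) = f x + j := by
  induction j using Int.induction_on with
  | zero => simp
  | succ i ih =>
    push_cast at ih ⊢
    rw [← add_assoc, hf, ih]; ring
  | pred i ih =>
    push_cast at ih ⊢
    have := hf (x + (-(i:ℝ) - 1))
    rw [show x + (-(i:ℝ) - 1) + 1 = x + -(i:ℝ) by ring, ih] at this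
    linarith

lemma aux_shift_iter {f : ℝ → ℝ} (hf : ∀ x, f (x + 1) = f x + 1) (k : ℕ) (x : ℝ) :
    f^[k] (x + 1) = f^[k] x + 1 := by
  induction k with
  | zero => simp
  | succ k ih => rw [Function.iterate_succ_apply', Function.iterate_succ_apply', ih, hf]

lemma aux_trans_iter {f : ℝ → ℝ} {a : ℝ} (hf : ∀ x, f x = x + a) (k : ℕ) (x : ℝ) :
    f^[k] x = x + k * a := by
  induction k with
  | zero => simp
  | succ k ih => rw [Function.iterate_succ_apply', ih, hf]; push_cast; ring

lemma aux_sep {f : ℝ → ℝ} {L : ℝ} (hL : 1 ≤ L)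
    (hf : ∀ x y, |f x - f y| ≤ L * |x - y|) (h1 : ∀ x, f (x + 1) = f x + 1)
    {p : ℤ} {q : ℕ} (hpq : Int.gcd p q = 1) (hfq : ∀ x, f^[q] x = x + p)
    (i : ℕ) (hi : 1 ≤ i) (hiq : i < q) (x : ℝ) (j : ℤ) :
    1 ≤ q * (L ^ q) ^ q * |f^[i] x - x - j| := by
  set d := |f^[i] x - x - j| with hd
  have hd0 : 0 ≤ d := abs_nonneg _
  have hΛ : 1 ≤ L ^ q := one_le_pow₀ hL
  have key : ∀ m : ℕ, |(f^[i])^[m] x - x - m * j| ≤ m * (L ^ q) ^ m * d := by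
    intro m
    induction m with
    | zero => simp
    | succ m ih =>
      rw [Function.iterate_succ_apply']
      set u := (f^[i])^[m] x
      have e1 : f^[i] (x + m * j) = f^[i] x + m * j := by
        have := aux_shift_int (aux_shift_iter h1 i) (m * j) x
        push_cast at this; exact this
      have e2 : |f^[i] u - f^[i] (x + m * j)| ≤ L ^ q * (m * (L ^ q) ^ m * d) := by
        calc _ ≤ L ^ i * |u - (x + m * j)| := aux_iter_lip hL hf i _ _
          _ ≤ L ^ q * |u - (x + m * j)| := by gcongr
          _ ≤ _ := by
            rw [← sub_sub]; gcongr
      have e3 : f^[i] u - x - ((m + 1 : ℕ) : ℝ) * j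
          = (f^[i] u - f^[i] (x + m * j)) + (f^[i] x - x - j) := by
        rw [e1]; push_cast; ring
      rw [e3]
      have e4 : d ≤ (L ^ q) ^ (m + 1) * d := le_mul_of_one_le_left hd0 (one_le_pow₀ hΛ)
      calc _ ≤ _ := abs_add_le _ _
        _ ≤ L ^ q * (m * (L ^ q) ^ m * d) + (L ^ q) ^ (m + 1) * d := add_le_add e2 e4
        _ = _ := by push_cast; ring
  have h := key q
  rw [← Function.iterate_mul, mul_comm i q, Function.iterate_mul, aux_trans_iter hfq] at h
  have h2 : (x + i * p - x - q * j : ℝ) = ((i * p - q * j : ℤ) : ℝ) := by push_cast; ring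
  rw [h2] at h
  refine le_trans ?_ h
  have hne : (i * p - q * j : ℤ) ≠ 0 := by
    intro h0
    have hdvd : (q : ℤ) ∣ i * p := ⟨j, by linarith⟩
    have hc : IsCoprime (q : ℤ) p := (Int.isCoprime_iff_gcd_eq_one.2 hpq).symm
    have := hc.dvd_of_dvd_mul_right hdvd
    have := Nat.le_of_dvd hi (Int.natCast_dvd_natCast.1 this)
    omega
  have := Int.one_le_abs hne
  exact_mod_cast this

lemma aux_core {F G : ℝ → ℝ} {L : ℝ} (hL : 1 ≤ L)
    (hF : ∀ x y, |F x - F y| ≤ L * |x - y|)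
    {p : ℤ} {q : ℕ} (hq : 1 ≤ q) (hFq : ∀ x, F^[q] x = x + p) (hGq : ∀ x, G^[q] x = x + p)
    (x D : ℝ) (hD0 : 0 ≤ D)
    (hD : ∀ k, 1 ≤ k → k < q → |F (G^[k] x) - G (G^[k] x)| ≤ D) :
    |F x - G x| ≤ L * (q * L ^ q * D) := by
  obtain ⟨r, rfl⟩ : ∃ r, q = r + 1 := ⟨q - 1, by omega⟩
  have key : ∀ k, k ≤ r → |F^[k] (G x) - G^[k] (G x)| ≤ k * L ^ k * D := by
    intro k
    induction k with
    | zero => simp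
    | succ k ih =>
      intro hk
      have ih := ih (by omega)
      rw [Function.iterate_succ_apply', Function.iterate_succ_apply']
      have a1 := hF (F^[k] (G x)) (G^[k] (G x))
      have a2 := hD (k + 1) (by omega) (by omega)
      rw [Function.iterate_succ_apply] at a2
      have e4 : D ≤ L ^ (k + 1) * D := le_mul_of_one_le_left hD0 (one_le_pow₀ hL)
      calc _ ≤ |F (F^[k] (G x)) - F (G^[k] (G x))| + |F (G^[k] (G x)) - G (G^[k] (G x))| :=
            abs_sub_le _ _ _
        _ ≤ L * (k * L ^ k * D) + L ^ (k + 1) * D := by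
            refine add_le_add (a1.trans ?_) (a2.trans e4)
            gcongr
        _ = _ := by push_cast; ring
  have h1 := key r le_rfl
  have h2 : G^[r] (G x) = x + p := by rw [← Function.iterate_succ_apply]; exact hGq x
  have h3 : F^[r] (F x) = x + p := by rw [← Function.iterate_succ_apply]; exact hFq x
  have h4 := hFq (F x)
  have h5 := hFq (G x)
  rw [Function.iterate_succ_apply'] at h4 h5
  have h6 := hF (F^[r] (F x)) (F^[r] (G x))
  rw [h4, h5, h3, ← h2, abs_sub_comm (G^[r] (G x))] at h6
  have e : |F x - G x| = |F x + p - (G x + p)| := by congr 1; ring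
  rw [e]
  refine h6.trans ?_
  gcongr
  refine h1.trans ?_
  gcongr
  · simp
  · omega

noncomputable def auxHat (w a x : ℝ) : ℝ := max 0 (w - ‖((x - a : ℝ) : UnitAddCircle)‖)

lemma auxHat_lip (w a x y : ℝ) : |auxHat w a x - auxHat w a y| ≤ |x - y| := by
  unfold auxHat
  have h1 : |‖((x - a : ℝ) : UnitAddCircle)‖ - ‖((y - a : ℝ) : UnitAddCircle)‖| ≤ |x - y| := by
    refine (abs_norm_sub_norm_le _ _).trans ?_
    rw [← AddCircle.coe_sub, UnitAddCircle.norm_eq]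
    have := round_le (x - a - (y - a)) 0
    simpa using this
  refine (abs_max_sub_max_le_max _ _ _ _).trans ?_
  simp only [sub_self, abs_zero, sub_sub_sub_cancel_left]
  rw [abs_sub_comm] at h1
  exact max_le (abs_nonneg _) h1

lemma auxHat_per (w a x : ℝ) : auxHat w a (x + 1) = auxHat w a x := by
  unfold auxHat
  rw [show x + 1 - a = (x - a) + 1 by ring, AddCircle.coe_add, AddCircle.coe_period, add_zero]

lemma auxHat_nonneg (w a x : ℝ) : 0 ≤ auxHat w a x := le_max_left _ _

lemma auxHat_le {w : ℝ} (hw : 0 ≤ w) (a x : ℝ) : auxHat w a x ≤ w :=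
  max_le hw (by linarith [norm_nonneg ((x - a : ℝ) : UnitAddCircle)])

lemma auxHat_self {w : ℝ} (hw : 0 ≤ w) (a : ℝ) : auxHat w a a = w := by
  simp [auxHat, hw]

lemma auxHat_zero {w a x : ℝ} (h : w ≤ ‖((x - a : ℝ) : UnitAddCircle)‖) : auxHat w a x = 0 :=
  max_eq_left (by linarith)

noncomputable def auxG (w : ℝ) (t : Fin 3 → ℝ) (x : ℝ) : ℝ :=
  ∑ i : Fin 3, t i * auxHat w ((i : ℕ) * w) x

lemma auxG_lip (w : ℝ) (t : Fin 3 → ℝ) (x y : ℝ) :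
    |auxG w t x - auxG w t y| ≤ 3 * ‖t‖ * |x - y| := by
  unfold auxG
  rw [← Finset.sum_sub_distrib]
  refine (Finset.abs_sum_le_sum_abs _ _).trans ?_
  calc _ ≤ ∑ i : Fin 3, ‖t‖ * |x - y| := by
        refine Finset.sum_le_sum fun i _ => ?_
        rw [← mul_sub, abs_mul]
        exact mul_le_mul (norm_le_pi_norm t i) (auxHat_lip _ _ _ _) (abs_nonneg _) (norm_nonneg _)
    _ = _ := by simp; ring

lemma auxG_bd {w : ℝ} (hw : 0 ≤ w) (hw1 : w ≤ 1) (t : Fin 3 → ℝ) (x : ℝ) :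
    |auxG w t x| ≤ 3 * ‖t‖ := by
  unfold auxG
  refine (Finset.abs_sum_le_sum_abs _ _).trans ?_
  calc _ ≤ ∑ i : Fin 3, ‖t‖ := by
        refine Finset.sum_le_sum fun i _ => ?_
        rw [abs_mul, abs_of_nonneg (auxHat_nonneg _ _ _)]
        have := norm_le_pi_norm t i
        rw [Real.norm_eq_abs] at this
        have h2 := auxHat_le hw ((i : ℕ) * w) x
        have h3 := auxHat_nonneg w ((i : ℕ) * w) x
        nlinarith [abs_nonneg (t i)]
    _ = _ := by simp

lemma auxG_per (w : ℝ) (t : Fin 3 → ℝ) (x : ℝ) : auxG w t (x + 1) = auxG w t x := by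
  simp [auxG, auxHat_per]

lemma auxG_center {w : ℝ} (hw : 0 ≤ w) (hw1 : w ≤ 1 / 8) (t : Fin 3 → ℝ) (i : Fin 3) :
    auxG w t ((i : ℕ) * w) = t i * w := by
  unfold auxG
  rw [Finset.sum_eq_single i]
  · rw [auxHat_self hw]
  · intro j _ hj
    rw [auxHat_zero, mul_zero]
    have hb : |((i : ℕ) : ℝ) * w - (j : ℕ) * w| ≤ |(1 : ℝ)| / 2 := by
      rw [abs_le, abs_one]
      fin_cases i <;> fin_cases j <;> constructor <;> norm_num <;> linarith
    rw [(AddCircle.norm_coe_eq_abs_iff 1 one_ne_zero).2 hb]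
    rw [← sub_mul, abs_mul, abs_of_nonneg hw]
    have : (1 : ℝ) ≤ |((i : ℕ) : ℝ) - (j : ℕ)| := by
      have : (1 : ℤ) ≤ |((i : ℕ) : ℤ) - (j : ℕ)| := by
        apply Int.one_le_abs
        intro h
        apply hj
        ext
        omega
      exact_mod_cast this
    nlinarith
  · simp

lemma auxG_far {w : ℝ} (hw : 0 ≤ w) (t : Fin 3 → ℝ) (i : Fin 3) (y : ℝ)
    (hy : ∀ j : ℤ, 3 * w ≤ |y - (i : ℕ) * w - j|) : auxG w t y = 0 := by
  unfold auxG
  refine Finset.sum_eq_zero fun k _ => ?_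
  rw [auxHat_zero, mul_zero]
  rw [UnitAddCircle.norm_eq]
  set r := round (y - ((k : ℕ) : ℝ) * w)
  have h := hy r
  have h2 : |((i : ℕ) : ℝ) * w - (k : ℕ) * w| ≤ 2 * w := by
    rw [abs_le]
    fin_cases i <;> fin_cases k <;> constructor <;> norm_num <;> linarith
  have h3 : y - (i : ℕ) * w - r = (y - (k : ℕ) * w - r) - ((i : ℕ) * w - (k : ℕ) * w) := by ring
  rw [h3] at h
  have := abs_sub (y - (k : ℕ) * w - r) ((i : ℕ) * w - (k : ℕ) * w)
  linarith

lemma aux_dim {r : ℝ} (hr : 0 < r) (K : ℝ) (hK : 0 ≤ K) (P : (Fin 3 → ℝ) → ℝ → ℝ → Prop)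
    (hP : ∀ t s b ω b' ω', ‖t‖ < r → ‖s‖ < r → P t b ω → P s b' ω' →
      dist t s ≤ K * (|b - b'| + |ω - ω'|)) :
    ∃ t, ‖t‖ < r ∧ ∀ b ω, ¬ P t b ω := by
  by_contra hcon
  push Not at hcon
  choose! β γ hβ using hcon
  let τ : Metric.ball (0 : Fin 3 → ℝ) r → ℝ × ℝ := fun t => (β t, γ t)
  have hτ : AntilipschitzWith ⟨K * 2, by positivity⟩ τ := by
    apply AntilipschitzWith.of_le_mul_dist
    rintro ⟨t, ht⟩ ⟨s, hs⟩
    have ht' : ‖t‖ < r := by simpa using ht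
    have hs' : ‖s‖ < r := by simpa using hs
    have h := hP t s _ _ _ _ ht' hs' (hβ t ht') (hβ s hs')
    have h1 : |β t - β s| ≤ dist (τ ⟨t, ht⟩) (τ ⟨s, hs⟩) := le_max_left _ _
    have h2 : |γ t - γ s| ≤ dist (τ ⟨t, ht⟩) (τ ⟨s, hs⟩) := le_max_right _ _
    calc dist (⟨t, ht⟩ : Metric.ball (0 : Fin 3 → ℝ) r) ⟨s, hs⟩ = dist t s := rfl
      _ ≤ _ := h
      _ ≤ K * (dist (τ ⟨t, ht⟩) (τ ⟨s, hs⟩) + dist (τ ⟨t, ht⟩) (τ ⟨s, hs⟩)) := by gcongr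
      _ = K * 2 * dist (τ ⟨t, ht⟩) (τ ⟨s, hs⟩) := by ring
  have h1 := hτ.le_dimH_image Set.univ
  have h2 : dimH (Set.univ : Set (Metric.ball (0 : Fin 3 → ℝ) r)) = 3 := by
    rw [← isometry_subtype_coe.dimH_image, Set.image_univ, Subtype.range_coe,
      Real.dimH_of_mem_nhds (Metric.ball_mem_nhds 0 hr)]
    simp
  have h3 : dimH (τ '' Set.univ) ≤ 2 := by
    refine (dimH_mono (Set.subset_univ _)).trans ?_
    rw [Real.dimH_univ_eq_finrank]
    simp
  rw [h2] at h1
  have := h1.trans h3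
  norm_num at this

lemma aux_le_essInf {f : ℝ → ℝ} {B : ℝ} (hB : ∀ x, |f x| ≤ B) (a : ℝ) :
    a ≤ essInf f volume ↔ ∀ᵐ x, a ≤ f x := by
  have hb : Filter.IsBoundedUnder (· ≥ ·) (MeasureTheory.ae (volume : Measure ℝ)) f :=
    ⟨-B, by simpa using Filter.Eventually.of_forall fun x => (abs_le.1 (hB x)).1⟩
  have hb' : Filter.IsBoundedUnder (· ≤ ·) (MeasureTheory.ae (volume : Measure ℝ)) f :=
    ⟨B, by simpa using Filter.Eventually.of_forall fun x => (abs_le.1 (hB x)).2⟩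
  constructor
  · intro h
    filter_upwards [ae_essInf_le hb] with x hx using h.trans hx
  · intro h
    exact le_essInf_of_ae_le a h hb'.isCoboundedUnder_ge

lemma aux_tri (a b c d : ℝ) (h1 : |a| ≤ c) (h2 : |b| ≤ d) : |a + b| ≤ c + d :=
  (abs_add_le _ _).trans (add_le_add h1 h2)

lemma aux_find (φ : ℝ → ℝ) (K M : ℝ) (hK0 : 0 ≤ K) (hK : ∀ x y, |φ x - φ y| ≤ K * |x - y|)
    (hM0 : 0 ≤ M) (hM : ∀ x, |φ x| ≤ M) (hper : ∀ x, φ (x + 1) = φ x)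
    (p : ℤ) (q : ℕ) (hq : 1 ≤ q) (hpq : Int.gcd p q = 1) (B : ℝ) (hB : 0 < B)
    (r : ℝ) (hr : 0 < r) (hr1 : 3 * r ≤ 1) :
    ∃ g : ℝ → ℝ, (∀ x y, |g x - g y| ≤ 3 * r * |x - y|) ∧ (∀ x, |g x| ≤ 3 * r) ∧
      (∀ x, g (x + 1) = g x) ∧ ∀ b ω : ℝ, B ≤ b → b ≤ 2 →
        ¬ ∀ x, (fun x => x + ω + b * (φ x + g x))^[q] x = x + p := by
  set L : ℝ := 1 + 2 * (K + 1) with hLdef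
  have hL : 1 ≤ L := by linarith
  have hq0 : (0 : ℝ) < q := by exact_mod_cast hq
  set Λ : ℝ := q * (L ^ q) ^ q with hΛ
  have hΛ0 : 0 < Λ := by positivity
  set w : ℝ := min (1 / 8) (1 / (3 * Λ)) with hw
  have hw0 : 0 < w := by positivity
  have hw8 : w ≤ 1 / 8 := min_le_left _ _
  have hwΛ : Λ * (3 * w) ≤ 1 := by
    have : w ≤ 1 / (3 * Λ) := min_le_right _ _
    rw [le_div_iff₀ (by positivity)] at this
    linarith
  set C : ℝ := L * (q * L ^ q) with hC
  have hC0 : 0 ≤ C := by positivity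
  obtain ⟨t, ht, hPt⟩ := aux_dim hr ((C + 1) * (M + 1) / (B * w)) (by positivity)
    (fun t b ω => B ≤ b ∧ b ≤ 2 ∧ ∀ x, (fun x => x + ω + b * (φ x + auxG w t x))^[q] x = x + p) (by
    rintro t s b ω b' ω' ht hs ⟨hb, hb2, hF⟩ ⟨hb', hb2', hG⟩
    have lip : ∀ (t : Fin 3 → ℝ) (b ω : ℝ), ‖t‖ < r → B ≤ b → b ≤ 2 → ∀ x y,
        |(x + ω + b * (φ x + auxG w t x)) - (y + ω + b * (φ y + auxG w t y))| ≤ L * |x - y| := by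
      intro t b ω ht hb hb2 x y
      have h1 := auxG_lip w t x y
      have h1' : |auxG w t x - auxG w t y| ≤ 1 * |x - y| :=
        h1.trans (by gcongr; linarith)
      have h2 := aux_tri _ _ _ _ (hK x y) h1'
      have h3 : |b * ((φ x - φ y) + (auxG w t x - auxG w t y))|
          ≤ 2 * (K * |x - y| + 1 * |x - y|) := by
        rw [abs_mul, abs_of_nonneg (by linarith : (0:ℝ) ≤ b)]
        gcongr
      have h4 := aux_tri (x - y) _ _ _ le_rfl h3
      rw [show x + ω + b * (φ x + auxG w t x) - (y + ω + b * (φ y + auxG w t y))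
        = (x - y) + b * ((φ x - φ y) + (auxG w t x - auxG w t y)) by ring]
      refine h4.trans (le_of_eq ?_)
      rw [hLdef]; ring
    set D : ℝ := (M + 1) * (|b - b'| + |ω - ω'|) with hD
    have hD0 : 0 ≤ D := by positivity
    have hbig : ∀ u : ℝ, |u| ≤ M + 1 → |(b - b') * u + (ω - ω')| ≤ D := by
      intro u hu
      have h1 : |(b - b') * u| ≤ |b - b'| * (M + 1) := by rw [abs_mul]; gcongr
      have h2 := aux_tri _ (ω - ω') _ _ h1 le_rfl
      refine h2.trans ?_
      rw [hD]
      nlinarith [abs_nonneg (ω - ω')]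
    rw [dist_pi_le_iff (by positivity)]
    intro i
    have hcore := aux_core (F := fun x => x + ω + b * (φ x + auxG w t x))
      (G := fun x => x + ω' + b' * (φ x + auxG w s x)) hL (lip t b ω ht hb hb2) hq hF hG
      ((i : ℕ) * w) D hD0 (by
        intro k hk hkq
        have hsep := aux_sep (f := fun x => x + ω' + b' * (φ x + auxG w s x)) hL
          (lip s b' ω' hs hb' hb2') (by intro x; simp only [hper, auxG_per]; ring)
          hpq hG k hk hkq ((i : ℕ) * w)
        set y := (fun x => x + ω' + b' * (φ x + auxG w s x))^[k] ((i : ℕ) * w)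
        have hy : ∀ j : ℤ, 3 * w ≤ |y - (i : ℕ) * w - j| := by
          intro j
          have := hsep j
          exact le_of_mul_le_mul_left (hwΛ.trans this) hΛ0
        have e1 := auxG_far hw0.le t i y hy
        have e2 := auxG_far hw0.le s i y hy
        simp only [e1, e2]
        have := hbig (φ y) ((hM y).trans (by linarith))
        convert this using 2
        ring)
    simp only [auxG_center hw0.le hw8] at hcore
    set x : ℝ := (i : ℕ) * w
    have hs1 : |φ x + s i * w| ≤ M + 1 := by
      have h1 := auxG_bd hw0.le (by linarith) s x
      rw [auxG_center hw0.le hw8] at h1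
      exact aux_tri _ _ _ _ (hM x) (by linarith)
    have h2 := hbig _ hs1
    have h3 : b * w * (t i - s i) = (x + ω + b * (φ x + t i * w) - (x + ω' + b' * (φ x + s i * w)))
        - ((b - b') * (φ x + s i * w) + (ω - ω')) := by ring
    have h4 : |b * w * (t i - s i)| ≤ L * (q * L ^ q * D) + D := by
      rw [h3]
      exact (abs_sub _ _).trans (add_le_add hcore h2)
    rw [abs_mul, abs_of_nonneg (by nlinarith : 0 ≤ b * w)] at h4
    rw [Real.dist_eq, div_mul_eq_mul_div, le_div_iff₀ (by positivity)]
    calc |t i - s i| * (B * w) = B * w * |t i - s i| := by ring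
      _ ≤ b * w * |t i - s i| := by gcongr
      _ ≤ _ := h4
      _ = _ := by rw [hD, hC]; ring)
  refine ⟨auxG w t, ?_, ?_, auxG_per w t, ?_⟩
  · intro x y
    exact (auxG_lip w t x y).trans (by gcongr)
  · intro x
    exact (auxG_bd hw0.le (by linarith) t x).trans (by linarith)
  · intro b ω hb hb2 h
    exact hPt b ω ⟨hb, hb2, h⟩

lemma aux_lipWith {f : ℝ → ℝ} {C : ℝ} (hC : 0 ≤ C) (hf : ∀ x y, |f x - f y| ≤ C * |x - y|) :
    LipschitzWith ⟨C, hC⟩ f :=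
  LipschitzWith.of_dist_le_mul fun x y => hf x y

lemma aux_deriv_bd {f : ℝ → ℝ} {C : ℝ} (hC : 0 ≤ C) (hf : ∀ x y, |f x - f y| ≤ C * |x - y|)
    (x : ℝ) : |deriv f x| ≤ C :=
  norm_deriv_le_of_lipschitz (aux_lipWith hC hf)

/-- Lipschitz density theorem: every standard-like Lipschitz forcing can be
approximated in the Lipschitz norm by a standard-like Lipschitz forcing `ψ`
whose family has no `p/q`-pinch point with coupling `b ∈ [1/n, 1]`. -/
theorem stmt7 (φ : ℝ → ℝ) (hL : ∃ K, LipschitzWith K φ)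
    (hper : ∀ x, φ (x + 1) = φ x)
    (hinf : essInf (deriv φ) volume = -1)
    (p : ℤ) (q : ℕ) (hq : 1 ≤ q) (hpq : Int.gcd p q = 1)
    (n : ℕ) (hn : 2 ≤ n) (ε : ℝ) (hε : 0 < ε) :
    ∃ ψ : ℝ → ℝ, (∃ K, LipschitzWith K ψ) ∧ (∀ x, ψ (x + 1) = ψ x) ∧
      essInf (deriv ψ) volume = -1 ∧
      (⨆ x : ℝ, |φ x - ψ x|) + lipConst (fun x => φ x - ψ x) < ε ∧
      ∀ b : ℝ, 1 / (n : ℝ) ≤ b → b ≤ 1 → ∀ ω : ℝ,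
        (fun x => x + ω + b * ψ x)^[q] ≠ fun x => x + (p : ℝ) := by
  obtain ⟨K', hK'⟩ := hL
  set K : ℝ := (K' : ℝ) with hKdef
  have hK0 : 0 ≤ K := K'.2
  have hK : ∀ x y, |φ x - φ y| ≤ K * |x - y| := fun x y => by
    simpa [Real.dist_eq] using hK'.dist_le_mul x y
  set M : ℝ := |φ 0| + K with hMdef
  have hM0 : 0 ≤ M := by positivity
  have hM : ∀ x, |φ x| ≤ M := by
    intro x
    have h1 : φ x = φ (Int.fract x) := by
      have hp : Function.Periodic φ 1 := hper
      have := hp.sub_int_mul_eq (x := x) ⌊x⌋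
      rw [mul_one] at this
      exact this.symm
    rw [h1]
    have h2 := hK (Int.fract x) 0
    rw [sub_zero, abs_of_nonneg (Int.fract_nonneg x)] at h2
    have h3 := abs_sub_abs_le_abs_sub (φ (Int.fract x)) (φ 0)
    have h4 := Int.fract_lt_one x
    nlinarith
  set δ : ℝ := min (1 / 2) (ε / (2 * M + 2 * K + 5)) with hδ
  have hδ0 : 0 < δ := by positivity
  have hδ2 : δ ≤ 1 / 2 := min_le_left _ _
  have hδε : δ * (2 * M + 2 * K + 5) ≤ ε := by
    have : δ ≤ ε / (2 * M + 2 * K + 5) := min_le_right _ _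
    rwa [le_div_iff₀ (by positivity)] at this
  have hn0 : (0 : ℝ) < n := by exact_mod_cast (by omega : 0 < n)
  obtain ⟨g, hgl, hgb, hgp, hg⟩ := aux_find φ K M hK0 hK hM0 hM hper p q hq hpq (1 / (2 * n))
    (by positivity) (δ / 3) (by positivity) (by linarith)
  rw [show 3 * (δ / 3) = δ by ring] at hgl hgb
  set χ : ℝ → ℝ := fun x => φ x + g x with hχ
  have hχl : ∀ x y, |χ x - χ y| ≤ (K + δ) * |x - y| := by
    intro x y
    rw [show χ x - χ y = (φ x - φ y) + (g x - g y) by simp only [hχ]; ring, add_mul]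
    exact aux_tri _ _ _ _ (hK x y) (hgl x y)
  have hKδ : 0 ≤ K + δ := by positivity
  have hφd := aux_deriv_bd hK0 hK
  have hχd := aux_deriv_bd hKδ hχl
  have hgd := aux_deriv_bd hδ0.le hgl
  have hsum : ∀ᵐ x, deriv χ x = deriv φ x + deriv g x := by
    filter_upwards [(aux_lipWith hK0 hK).ae_differentiableAt_real,
      (aux_lipWith hδ0.le hgl).ae_differentiableAt_real] with x h1 h2
    exact deriv_fun_add h1 h2
  set m := essInf (deriv χ) volume with hm
  have hm1 : -1 - δ ≤ m := by
    rw [hm, aux_le_essInf hχd]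
    filter_upwards [hsum, (aux_le_essInf hφd (-1)).1 hinf.ge] with x h1 h2
    have := (abs_le.1 (hgd x)).1
    linarith
  have hm2 : m - δ ≤ -1 := by
    rw [← hinf, aux_le_essInf hφd]
    filter_upwards [hsum, (aux_le_essInf hχd m).1 le_rfl] with x h1 h2
    have := (abs_le.1 (hgd x)).2
    linarith
  have hmneg : 0 < -m := by linarith
  set c : ℝ := (-m)⁻¹ with hc
  have hc0 : 0 < c := by positivity
  have hcm : c * m = -1 := by
    have : c * (-m) = 1 := inv_mul_cancel₀ hmneg.ne'
    linarith
  have hc2 : c ≤ 2 := by nlinarith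
  have hc1 : 1 / 2 ≤ c := by nlinarith
  have hc3 : |1 - c| ≤ 2 * δ := by
    rw [abs_le]; constructor <;> nlinarith
  have hψl : ∀ x y, |c * χ x - c * χ y| ≤ (c * (K + δ)) * |x - y| := by
    intro x y
    rw [← mul_sub, abs_mul, abs_of_pos hc0, mul_assoc]
    gcongr
    exact hχl x y
  have hψ0 : 0 ≤ c * (K + δ) := by positivity
  have hψd := aux_deriv_bd hψ0 hψl
  have hder : ∀ x, deriv (fun x => c * χ x) x = c * deriv χ x := fun x =>
    deriv_const_mul_field c
  refine ⟨fun x => c * χ x, ⟨_, aux_lipWith hψ0 hψl⟩, ?_, ?_, ?_, ?_⟩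
  · intro x
    simp only [hχ, hper, hgp]
  · apply le_antisymm
    · set e := essInf (deriv fun x => c * χ x) volume with he
      have h1 := (aux_le_essInf hψd e).1 le_rfl
      have h2 : e / c ≤ m := by
        rw [hm, aux_le_essInf hχd]
        filter_upwards [h1] with x hx
        rw [hder] at hx
        rw [div_le_iff₀ hc0]; linarith
      rw [div_le_iff₀ hc0] at h2
      linarith
    · rw [aux_le_essInf hψd]
      filter_upwards [(aux_le_essInf hχd m).1 le_rfl] with x hx
      rw [hder, ← hcm]
      gcongr
  · have hdec : ∀ x, φ x - c * χ x = (1 - c) * φ x + (-c) * g x := by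
      intro x; simp only [hχ]; ring
    have s1 : (⨆ x : ℝ, |φ x - c * χ x|) ≤ 2 * δ * M + 2 * δ := by
      apply ciSup_le
      intro x
      rw [hdec]
      apply aux_tri
      · rw [abs_mul]
        exact mul_le_mul hc3 (hM x) (abs_nonneg _) (by positivity)
      · rw [abs_mul, abs_neg, abs_of_pos hc0]
        exact mul_le_mul hc2 (hgb x) (abs_nonneg _) (by positivity)
    have s2 : lipConst (fun x => φ x - c * χ x) ≤ 2 * δ * K + 2 * δ := by
      apply csInf_le ⟨0, fun k hk => hk.1⟩
      refine ⟨by positivity, fun x y => ?_⟩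
      simp only [hdec]
      rw [show (1 - c) * φ x + (-c) * g x - ((1 - c) * φ y + (-c) * g y)
        = (1 - c) * (φ x - φ y) + (-c) * (g x - g y) by ring, add_mul]
      apply aux_tri
      · rw [abs_mul, mul_assoc]
        exact mul_le_mul hc3 (hK x y) (abs_nonneg _) (by positivity)
      · rw [abs_mul, abs_neg, abs_of_pos hc0, mul_assoc]
        exact mul_le_mul hc2 (hgl x y) (abs_nonneg _) (by positivity)
    nlinarith
  · intro b hb hb1 ω h
    have hb0 : 0 < b := lt_of_lt_of_le (by positivity) hb
    apply hg (b * c) ω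
    · have : 1 / (2 * (n : ℝ)) = 1 / n * (1 / 2) := by field_simp
      rw [this]
      gcongr
    · nlinarith
    · intro x
      have := congrFun h x
      simp only [← mul_assoc] at this
      exact this
end

section
/- Let q > 1 and N > 3q be integers, let n > 1 be real, let m ∈ ℝ^N satisfy m_i > 0 for all i and ∑ m_i = 1, and let ŵ ∈ ℝ^N satisfy ŵ_1 = −1, ŵ_i ≥ −1 for all i, and ∑ ŵ_i·m_i = 0. Then for every ε > 0 there exists w ∈ ℝ^N with w_1 = −1, w_i ≥ −1 for all i, ∑ w_i·m_i = 0, and max_i |w_i − ŵ_i| < ε, such that distinct (1/n)-plausible polynomials for w have distinct associated solutions: whenever J_1 and J_2 are multisets of cardinality q with elements in {1,…,N} whose associated polynomials p_{J_1}(y) = ∏_{j∈J_1}(1 + w_j·y) and p_{J_2}(y) = ∏_{j∈J_2}(1 + w_j·y) are not identical, and b_1, b_2 ∈ [1/n, 1] satisfy p_{J_1}(b_1) = 1 and p_{J_2}(b_2) = 1, then b_1 ≠ b_2. -/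
namespace PlausAux

open Finset

def X {N : ℕ} (z : Fin N) (m w : Fin N → ℝ) : Prop :=
  w z = -1 ∧ (∀ i, i ≠ z → -1 < w i) ∧ ∑ i, w i * m i = 0

def Bad {N : ℕ} (n : ℝ) (J₁ J₂ : Multiset (Fin N)) : Set (Fin N → ℝ) :=
  {w | ∃ b ∈ Set.Icc (1 / n) 1, (J₁.map (fun j => 1 + w j * b)).prod = 1 ∧
    (J₂.map (fun j => 1 + w j * b)).prod = 1}

lemma curve (A B C E : ℝ) (hD : A * E - B * C ≠ 0) (R₁ R₂ : ℝ → ℝ)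
    (h₁ : ContDiffOn ℝ 1 R₁ (Set.Ioo 0 1)) (h₂ : ContDiffOn ℝ 1 R₂ (Set.Ioo 0 1))
    (s₀ t₀ η : ℝ) (hη : 0 < η) :
    ∃ s t : ℝ, |s - s₀| < η ∧ |t - t₀| < η ∧ ∀ b ∈ Set.Ioc (0 : ℝ) 1, 0 < 1 + s * b →
      0 < 1 + t * b →
      ¬ (A * Real.log (1 + s * b) + B * Real.log (1 + t * b) + R₁ b = 0 ∧
         C * Real.log (1 + s * b) + E * Real.log (1 + t * b) + R₂ b = 0) := by
  set f : ℝ → ℝ × ℝ := fun b =>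
    ((Real.exp ((B * R₂ b - E * R₁ b) / (A * E - B * C)) - 1) / b,
     (Real.exp ((C * R₁ b - A * R₂ b) / (A * E - B * C)) - 1) / b) with hf
  have hfc : ContDiffOn ℝ 1 f (Set.Ioo 0 1) := by
    apply ContDiffOn.prodMk
    · apply ContDiffOn.div _ contDiffOn_id (fun x hx => hx.1.ne')
      exact ((((contDiffOn_const.mul h₂).sub (contDiffOn_const.mul h₁)).div_const _).exp).sub
        contDiffOn_const
    · apply ContDiffOn.div _ contDiffOn_id (fun x hx => hx.1.ne')
      exact ((((contDiffOn_const.mul h₁).sub (contDiffOn_const.mul h₂)).div_const _).exp).sub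
        contDiffOn_const
  have hdim : dimH (f '' Set.Ioo 0 1 ∪ {f 1}) < (Module.finrank ℝ (ℝ × ℝ) : ℕ) := by
    rw [dimH_union, dimH_singleton]
    have h1 := hfc.dimH_image_le (convex_Ioo 0 1) subset_rfl
    have h2 : dimH (Set.Ioo (0 : ℝ) 1) ≤ 1 := by
      rw [← Real.dimH_univ]; exact dimH_mono (Set.subset_univ _)
    have h3 : (1 : ENNReal) < ((Module.finrank ℝ (ℝ × ℝ) : ℕ) : ENNReal) := by
      simp
    refine max_lt ((h1.trans h2).trans_lt h3) (lt_trans (by norm_num) h3)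
  obtain ⟨⟨s, t⟩, hst, hd⟩ := (dense_compl_of_dimH_lt_finrank hdim).exists_dist_lt (s₀, t₀) hη
  rw [Prod.dist_eq, max_lt_iff] at hd
  refine ⟨s, t, by simpa [Real.dist_eq, abs_sub_comm] using hd.1,
    by simpa [Real.dist_eq, abs_sub_comm] using hd.2, ?_⟩
  rintro b hb hs ht ⟨e₁, e₂⟩
  apply hst
  have hfb : f b = (s, t) := by
    have l1 : (B * R₂ b - E * R₁ b) / (A * E - B * C) = Real.log (1 + s * b) := by
      rw [div_eq_iff hD]; linear_combination B * e₂ - E * e₁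
    have l2 : (C * R₁ b - A * R₂ b) / (A * E - B * C) = Real.log (1 + t * b) := by
      rw [div_eq_iff hD]; linear_combination C * e₁ - A * e₂
    have hb0 : b ≠ 0 := hb.1.ne'
    simp only [hf, l1, l2, Real.exp_log hs, Real.exp_log ht]
    ext <;> simp [hb0]
  rcases hb.2.lt_or_eq with h | h
  · exact Or.inl ⟨b, ⟨hb.1, h⟩, hfb⟩
  · right; rw [← h, hfb]; rfl

lemma log_eq {N : ℕ} (J : Multiset (Fin N)) (f : Fin N → ℝ) (h : (J.map f).prod = 1) :
    (∀ j ∈ J, f j ≠ 0) ∧ ∑ l, (J.count l : ℝ) * Real.log (f l) = 0 := by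
  have h0 : ∀ j ∈ J, f j ≠ 0 := by
    intro j hj h0
    have : (J.map f).prod = 0 := Multiset.prod_eq_zero (Multiset.mem_map.2 ⟨j, hj, h0⟩)
    rw [this] at h; norm_num at h
  refine ⟨h0, ?_⟩
  have := Real.log_multiset_prod (s := J.map f) (by
    intro x hx; obtain ⟨j, hj, rfl⟩ := Multiset.mem_map.1 hx; exact h0 j hj)
  rw [h, Real.log_one, Multiset.map_map, Finset.sum_multiset_map_count] at this
  rw [this]
  symm
  have h2 := Finset.sum_subset (Finset.subset_univ J.toFinset)
    (f := fun l => (J.count l : ℝ) * Real.log (f l)) (by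
    intro x _ hx; simp at hx; simp [hx])
  rw [← h2]
  simp

lemma bad_closed {N : ℕ} (n : ℝ) (J₁ J₂ : Multiset (Fin N)) : IsClosed (Bad n J₁ J₂) := by
  have : Bad n J₁ J₂ = Prod.snd '' {p : Set.Icc (1 / n) 1 × (Fin N → ℝ) |
      (J₁.map (fun j => 1 + p.2 j * (p.1 : ℝ))).prod = 1 ∧
      (J₂.map (fun j => 1 + p.2 j * (p.1 : ℝ))).prod = 1} := by
    ext w
    constructor
    · rintro ⟨b, hb, h⟩
      exact ⟨(⟨b, hb⟩, w), h, rfl⟩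
    · rintro ⟨⟨⟨b, hb⟩, w'⟩, h, rfl⟩
      exact ⟨b, hb, h⟩
  rw [this]
  apply isClosedMap_snd_of_compactSpace
  apply IsClosed.inter
  · exact isClosed_eq (continuous_multiset_prod _ (fun i _ => by fun_prop)) continuous_const
  · exact isClosed_eq (continuous_multiset_prod _ (fun i _ => by fun_prop)) continuous_const

lemma dep {N q : ℕ} (hq : 1 < q) (n : ℝ) (hn : 1 < n) (z : Fin N) (m w : Fin N → ℝ)
    (hw : X z m w) (J₁ J₂ : Multiset (Fin N)) (hJ₁ : J₁.card = q) (hJ₂ : J₂.card = q)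
    (hD : ∀ i j, i ≠ z → j ≠ z →
      (J₁.count i : ℝ) * J₂.count j - J₁.count j * J₂.count i = 0)
    (hb : w ∈ Bad n J₁ J₂) : J₁ = J₂ := by
  obtain ⟨b, hb, e₁, e₂⟩ := hb
  have hb0 : 0 < b := lt_of_lt_of_le (by positivity) hb.1
  obtain ⟨n₁, e₁⟩ := log_eq J₁ _ e₁
  obtain ⟨n₂, e₂⟩ := log_eq J₂ _ e₂
  have c₁ : ∑ l, (J₁.count l : ℝ) = q := by
    rw [← hJ₁, ← Multiset.sum_count_eq_card (s := Finset.univ) (m := J₁) (by simp)]; push_cast; rfl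
  have c₂ : ∑ l, (J₂.count l : ℝ) = q := by
    rw [← hJ₂, ← Multiset.sum_count_eq_card (s := Finset.univ) (m := J₂) (by simp)]; push_cast; rfl
  rw [← Finset.add_sum_erase _ _ (Finset.mem_univ z)] at e₁ e₂ c₁ c₂
  set C₁ := ∑ l ∈ univ.erase z, (J₁.count l : ℝ) with hC₁
  set C₂ := ∑ l ∈ univ.erase z, (J₂.count l : ℝ) with hC₂
  have k : ∀ i, i ≠ z → (J₁.count i : ℝ) * C₂ = C₁ * J₂.count i := by
    intro i hi
    rw [hC₁, hC₂, Finset.mul_sum, Finset.sum_mul]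
    refine Finset.sum_congr rfl fun j hj => ?_
    linarith [hD i j hi (Finset.ne_of_mem_erase hj)]
  clear_value C₁ C₂
  have k2 : (∑ l ∈ univ.erase z, (J₁.count l : ℝ) * Real.log (1 + w l * b)) * C₂ =
      C₁ * ∑ l ∈ univ.erase z, (J₂.count l : ℝ) * Real.log (1 + w l * b) := by
    rw [Finset.mul_sum, Finset.sum_mul]
    refine Finset.sum_congr rfl fun j hj => ?_
    linear_combination Real.log (1 + w j * b) * k j (Finset.ne_of_mem_erase hj)
  have hqp : (0 : ℝ) < q := by exact_mod_cast (by omega : 0 < q)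
  have k3 : (q : ℝ) * (((J₁.count z : ℝ) - J₂.count z) * Real.log (1 + w z * b)) = 0 := by
    linear_combination C₂ * e₁ - C₁ * e₂ - k2 -
      Real.log (1 + w z * b) * (J₁.count z * c₂ - J₂.count z * c₁)
  have hz : (J₁.count z : ℝ) = J₂.count z := by
    by_contra hne
    have hL : Real.log (1 + w z * b) = 0 := by
      rcases mul_eq_zero.1 k3 with h | h
      · exact absurd h hqp.ne'
      · rcases mul_eq_zero.1 h with h | h
        · exact absurd (sub_eq_zero.1 h) hne
        · exact h
    have hnz : 1 + w z * b ≠ 0 := by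
      by_cases h : z ∈ J₁
      · exact n₁ z h
      · by_cases h' : z ∈ J₂
        · exact n₂ z h'
        · exfalso; apply hne; simp [h, h']
    rw [hw.1] at hL hnz
    have hb1 : b < 1 := lt_of_le_of_ne hb.2 (by rintro rfl; norm_num at hnz)
    have := Real.log_neg (x := 1 + -1 * b) (by linarith) (by linarith)
    linarith
  have hC : C₁ = C₂ := by linarith
  ext l
  by_cases hl : l = z
  · subst hl; exact_mod_cast hz
  · by_cases h0 : C₁ = 0
    · have h0' : C₂ = 0 := by linarith
      rw [hC₁, Finset.sum_eq_zero_iff_of_nonneg (by intros; positivity)] at h0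
      rw [hC₂, Finset.sum_eq_zero_iff_of_nonneg (by intros; positivity)] at h0'
      have a := h0 l (by simp [hl])
      have a' := h0' l (by simp [hl])
      exact_mod_cast a.trans a'.symm
    · have := k l hl
      rw [← hC, mul_comm] at this
      exact_mod_cast mul_left_cancel₀ h0 this

lemma indep {N q : ℕ} (hN : 3 * q < N) (hq : 1 < q) (n : ℝ) (hn : 1 < n) (z : Fin N)
    (m w : Fin N → ℝ) (hm : ∀ i, 0 < m i)
    (hw : X z m w) (J₁ J₂ : Multiset (Fin N)) (hJ₁ : J₁.card = q) (hJ₂ : J₂.card = q)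
    (i j : Fin N) (hi : i ≠ z) (hj : j ≠ z)
    (hD : (J₁.count i : ℝ) * J₂.count j - J₁.count j * J₂.count i ≠ 0)
    (δ : ℝ) (hδ : 0 < δ) : ∃ w', X z m w' ∧ (∀ l, |w' l - w l| < δ) ∧ w' ∉ Bad n J₁ J₂ := by
  have hij : i ≠ j := by rintro rfl; apply hD; ring
  obtain ⟨k, -, hk⟩ : ∃ k ∈ (univ : Finset (Fin N)), k ∉ insert z (J₁.toFinset ∪ J₂.toFinset) := by
    apply Finset.exists_mem_notMem_of_card_lt_card
    have h1 := Finset.card_insert_le z (J₁.toFinset ∪ J₂.toFinset)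
    have h2 := Finset.card_union_le J₁.toFinset J₂.toFinset
    have h3 := J₁.toFinset_card_le
    have h4 := J₂.toFinset_card_le
    simp only [Finset.card_univ, Fintype.card_fin]
    omega
  simp only [Finset.mem_insert, Finset.mem_union, Multiset.mem_toFinset, not_or] at hk
  obtain ⟨hkz, hk₁, hk₂⟩ := hk
  have ck₁ : J₁.count k = 0 := by simp [hk₁]
  have ck₂ : J₂.count k = 0 := by simp [hk₂]
  have hki : i ≠ k := by rintro rfl; apply hD; simp [ck₁, ck₂]
  have hkj : j ≠ k := by rintro rfl; apply hD; simp [ck₁, ck₂]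
  set μ := min δ (min (w i + 1) (min (w j + 1) (w k + 1))) with hμ
  have hμ0 : 0 < μ := by
    have := hw.2.1 i hi
    have := hw.2.1 j hj
    have := hw.2.1 k hkz
    simp only [hμ, lt_min_iff]
    refine ⟨hδ, ?_, ?_, ?_⟩ <;> linarith
  have μ1 : μ ≤ δ := min_le_left _ _
  have μ2 : μ ≤ w i + 1 := (min_le_right _ _).trans (min_le_left _ _)
  have μ3 : μ ≤ w j + 1 := (min_le_right _ _).trans ((min_le_right _ _).trans (min_le_left _ _))
  have μ4 : μ ≤ w k + 1 := (min_le_right _ _).trans ((min_le_right _ _).trans (min_le_right _ _))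
  clear_value μ
  have mi := hm i
  have mj := hm j
  have mk := hm k
  set η := μ * m k / (m k + (m i + m j)) with hη
  have hη0 : 0 < η := by positivity
  have hημ : η ≤ μ := by
    rw [hη, div_le_iff₀ (by positivity)]; nlinarith
  have hημ' : (m i + m j) * η ≤ μ * m k := by
    rw [hη, ← mul_div_assoc, div_le_iff₀ (by positivity)]
    nlinarith [mul_pos hμ0 mk, mul_pos (mul_pos hμ0 mk) mk]
  let R : Multiset (Fin N) → ℝ → ℝ := fun J b =>
    ∑ l ∈ (univ.erase i).erase j, (J.count l : ℝ) * Real.log (1 + w l * b)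
  have hR : ∀ J, ContDiffOn ℝ 1 (R J) (Set.Ioo 0 1) := by
    intro J
    apply ContDiffOn.sum
    intro l _
    apply contDiffOn_const.mul
    apply ContDiffOn.log
    · fun_prop
    · intro x hx
      have : -1 ≤ w l := by
        by_cases h : l = z
        · rw [h, hw.1]
        · exact (hw.2.1 l h).le
      have := hx.1
      have := hx.2
      nlinarith
  obtain ⟨s, t, hs, ht, hst⟩ := curve (J₁.count i) (J₁.count j) (J₂.count i) (J₂.count j) hD
    (R J₁) (R J₂) (hR _) (hR _) (w i) (w j) η hη0
  set κ := -(m i * (s - w i) + m j * (t - w j)) / m k with hκ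
  have hκμ : |κ| < μ := by
    rw [hκ, abs_div, abs_neg, abs_of_pos mk, div_lt_iff₀ mk]
    calc |m i * (s - w i) + m j * (t - w j)| ≤ |m i * (s - w i)| + |m j * (t - w j)| :=
          abs_add_le _ _
      _ = m i * |s - w i| + m j * |t - w j| := by
          rw [abs_mul, abs_mul, abs_of_pos mi, abs_of_pos mj]
      _ < m i * η + m j * η := by gcongr
      _ ≤ μ * m k := by linarith
  let w' : Fin N → ℝ := fun l => w l + ((Pi.single i (s - w i) : Fin N → ℝ) l +
    (Pi.single j (t - w j) : Fin N → ℝ) l + (Pi.single k κ : Fin N → ℝ) l)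
  have wi : w' i = s := by simp [w', hij, hki]
  have wj : w' j = t := by simp [w', hij.symm, hkj]
  have wk : w' k = w k + κ := by simp [w', hki.symm, hkj.symm]
  have wl : ∀ l, l ≠ i → l ≠ j → l ≠ k → w' l = w l := by
    intro l h1 h2 h3; simp [w', h1, h2, h3]
  have hwX : X z m w' := by
    refine ⟨?_, ?_, ?_⟩
    · rw [wl z hi.symm hj.symm (Ne.symm hkz), hw.1]
    · intro l hl
      by_cases h1 : l = i
      · subst h1; rw [wi]; linarith [(abs_lt.1 hs).1]
      by_cases h2 : l = j
      · subst h2; rw [wj]; linarith [(abs_lt.1 ht).1]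
      by_cases h3 : l = k
      · subst h3; rw [wk]; linarith [(abs_lt.1 hκμ).1]
      rw [wl l h1 h2 h3]; exact hw.2.1 l hl
    · simp only [w', add_mul, Finset.sum_add_distrib, hw.2.2]
      simp only [Pi.single_apply, ite_mul, zero_mul, Finset.sum_ite_eq', Finset.mem_univ, if_true]
      rw [hκ]; field_simp; ring
  refine ⟨w', hwX, ?_, ?_⟩
  · intro l
    by_cases h1 : l = i
    · subst h1; rw [wi]; linarith
    by_cases h2 : l = j
    · subst h2; rw [wj]; linarith
    by_cases h3 : l = k
    · subst h3; rw [wk]; simpa using hκμ.trans_le μ1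
    rw [wl l h1 h2 h3]; simpa using hδ
  · rintro ⟨b, hb, e₁, e₂⟩
    have hb0 : 0 < b := lt_of_lt_of_le (by positivity) hb.1
    have key : ∀ J : Multiset (Fin N), J.count k = 0 → 
        (J.map (fun j => 1 + w' j * b)).prod = 1 →
        (J.count i : ℝ) * Real.log (1 + s * b) + J.count j * Real.log (1 + t * b) + R J b = 0 := by
      intro J hJ e
      obtain ⟨-, e⟩ := log_eq J _ e
      rw [← Finset.add_sum_erase _ _ (Finset.mem_univ i),
        ← Finset.add_sum_erase (univ.erase i) _ (a := j) (by simp [hij.symm])] at e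
      rw [wi, wj] at e
      have : R J b = ∑ l ∈ (univ.erase i).erase j, (J.count l : ℝ) * Real.log (1 + w' l * b) := by
        refine Finset.sum_congr rfl fun l hl => ?_
        simp only [Finset.mem_erase, Finset.mem_univ, and_true] at hl
        by_cases h3 : l = k
        · subst h3; simp [hJ]
        · rw [wl l hl.2 hl.1 h3]
      rw [this]; linarith
    have hs1 := hwX.2.1 i hi
    have ht1 := hwX.2.1 j hj
    rw [wi] at hs1
    rw [wj] at ht1
    exact hst b ⟨hb0, hb.2⟩ (by nlinarith [hb.2]) (by nlinarith [hb.2])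
      ⟨key J₁ ck₁ e₁, key J₂ ck₂ e₂⟩

lemma step {N q : ℕ} (hN : 3 * q < N) (hq : 1 < q) (n : ℝ) (hn : 1 < n) (z : Fin N)
    (m w : Fin N → ℝ) (hm : ∀ i, 0 < m i)
    (hw : X z m w) (J₁ J₂ : Multiset (Fin N)) (hJ₁ : J₁.card = q) (hJ₂ : J₂.card = q)
    (hne : J₁ ≠ J₂)
    (δ : ℝ) (hδ : 0 < δ) : ∃ w', X z m w' ∧ (∀ l, |w' l - w l| < δ) ∧ w' ∉ Bad n J₁ J₂ := by
  by_cases h : ∀ i j, i ≠ z → j ≠ z →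
      (J₁.count i : ℝ) * J₂.count j - J₁.count j * J₂.count i = 0
  · exact ⟨w, hw, fun l => by simpa using hδ, fun hb => hne (dep hq n hn z m w hw J₁ J₂ hJ₁ hJ₂ h hb)⟩
  · push Not at h
    obtain ⟨i, j, hi, hj, hD⟩ := h
    exact indep hN hq n hn z m w hm hw J₁ J₂ hJ₁ hJ₂ i j hi hj hD δ hδ

lemma many {N q : ℕ} (hN : 3 * q < N) (hq : 1 < q) (n : ℝ) (hn : 1 < n) (z : Fin N)
    (m w : Fin N → ℝ) (hm : ∀ i, 0 < m i) (hw : X z m w) (δ : ℝ) (hδ : 0 < δ)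
    (S : Finset (Multiset (Fin N) × Multiset (Fin N)))
    (hS : ∀ p ∈ S, p.1.card = q ∧ p.2.card = q ∧ p.1 ≠ p.2) :
    ∃ w', X z m w' ∧ dist w' w < δ ∧ ∀ p ∈ S, w' ∉ Bad n p.1 p.2 := by
  classical
  induction S using Finset.induction_on with
  | empty => exact ⟨w, hw, by simpa using hδ, by simp⟩
  | insert p S hp ih =>
    obtain ⟨w₁, h1, h2, h3⟩ := ih fun p hp => hS p (Finset.mem_insert_of_mem hp)
    have ho : IsOpen (Metric.ball w δ ∩ ⋂ p ∈ S, (Bad n p.1 p.2)ᶜ) :=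
      Metric.isOpen_ball.inter (isOpen_biInter_finset fun p _ => (bad_closed n p.1 p.2).isOpen_compl)
    obtain ⟨r, hr, hr'⟩ := Metric.isOpen_iff.1 ho w₁ ⟨h2, by simpa using h3⟩
    obtain ⟨a, b, c⟩ := hS p (Finset.mem_insert_self _ _)
    obtain ⟨w₂, k1, k2, k3⟩ := step hN hq n hn z m w₁ hm h1 p.1 p.2 a b c r hr
    have := hr' (show w₂ ∈ Metric.ball w₁ r by
      rw [Metric.mem_ball, dist_pi_lt_iff hr]; simpa [Real.dist_eq] using k2)
    refine ⟨w₂, k1, this.1, ?_⟩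
    intro p' hp'
    rcases Finset.mem_insert.1 hp' with rfl | h
    · exact k3
    · have := this.2
      simp only [Set.mem_iInter] at this
      exact this p' h

lemma start {N : ℕ} (z : Fin N) (m : Fin N → ℝ) (hm : ∀ i, 0 < m i) (hm1 : ∑ i, m i = 1)
    (hz1 : m z < 1)
    (wh : Fin N → ℝ) (hwh0 : wh z = -1) (hwh : ∀ i, -1 ≤ wh i)
    (hwhm : ∑ i, wh i * m i = 0) (ε : ℝ) (hε : 0 < ε) :
    ∃ w, X z m w ∧ dist w wh < ε := by
  let u : Fin N → ℝ := fun i => if i = z then -1 else m z / (1 - m z)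
  have hc : 0 < m z / (1 - m z) := div_pos (hm z) (by linarith)
  have hu : ∑ i, u i * m i = 0 := by
    rw [← Finset.add_sum_erase _ _ (Finset.mem_univ z)] at hm1 ⊢
    have : ∑ i ∈ univ.erase z, u i * m i = m z / (1 - m z) * ∑ i ∈ univ.erase z, m i := by
      rw [Finset.mul_sum]
      refine Finset.sum_congr rfl fun i hi => ?_
      simp [u, Finset.ne_of_mem_erase hi]
    rw [this, show ∑ i ∈ univ.erase z, m i = 1 - m z by linarith,
      div_mul_cancel₀ _ (by linarith)]
    simp [u]
  let g : ℝ → Fin N → ℝ := fun t i => (1 - t) * wh i + t * u i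
  have hg : Continuous g := by fun_prop
  have hg0 : g 0 = wh := by ext i; simp [g]
  obtain ⟨r, hr, h⟩ := Metric.continuous_iff.1 hg 0 ε hε
  have hr2 : 0 < min (r / 2) 1 := by positivity
  have hr3 := min_le_left (r / 2) 1
  have hr4 := min_le_right (r / 2) 1
  set t := min (r / 2) 1
  have := h t (by rw [Real.dist_eq, sub_zero, abs_of_pos hr2]; linarith)
  rw [hg0] at this
  refine ⟨g t, ⟨?_, ?_, ?_⟩, this⟩
  · simp [g, u, hwh0]; ring
  · intro i hi
    simp only [g, u, if_neg hi]
    nlinarith [hwh i, mul_pos hr2 hc]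
  · have : ∀ i, g t i * m i = (1 - t) * (wh i * m i) + t * (u i * m i) := by
      intro i; simp only [g]; ring
    simp only [this, Finset.sum_add_distrib, ← Finset.mul_sum, hu, hwhm]; simp

end PlausAux



/-- Perturbation lemma for weights: given masses `m` and weights `ŵ` with
`ŵ_1 = -1`, `ŵ_i ≥ -1`, `∑ ŵ_i m_i = 0`, there is an arbitrarily close weight
vector `w` (with the same constraints) such that distinct `(1/n)`-plausible
polynomials for `w` have distinct associated solutions in `[1/n, 1]`. -/
theorem stmt11 (q N : ℕ) (hq : 1 < q) (hN : 3 * q < N) (n : ℝ) (hn : 1 < n)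
    (m : Fin N → ℝ) (hm : ∀ i, 0 < m i) (hm1 : ∑ i, m i = 1)
    (wh : Fin N → ℝ) (hwh0 : wh ⟨0, by omega⟩ = -1) (hwh : ∀ i, -1 ≤ wh i)
    (hwhm : ∑ i, wh i * m i = 0) (ε : ℝ) (hε : 0 < ε) :
    ∃ w : Fin N → ℝ, w ⟨0, by omega⟩ = -1 ∧ (∀ i, -1 ≤ w i) ∧
      (∑ i, w i * m i = 0) ∧ (∀ i, |w i - wh i| < ε) ∧
      ∀ J₁ J₂ : Multiset (Fin N),
        Multiset.card J₁ = q → Multiset.card J₂ = q →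
        (fun y : ℝ => (J₁.map (fun j => 1 + w j * y)).prod) ≠
          (fun y : ℝ => (J₂.map (fun j => 1 + w j * y)).prod) →
        ∀ b₁ ∈ Set.Icc (1 / n) 1, ∀ b₂ ∈ Set.Icc (1 / n) 1,
          (J₁.map (fun j => 1 + w j * b₁)).prod = 1 →
          (J₂.map (fun j => 1 + w j * b₂)).prod = 1 →
          b₁ ≠ b₂ := by
  classical
  set z : Fin N := ⟨0, by omega⟩ with hz
  have hz1 : m z < 1 := by
    rw [← hm1]
    exact Finset.single_lt_sum (j := ⟨1, by omega⟩) (by simp [hz]) (Finset.mem_univ _)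
      (Finset.mem_univ _) (hm _) (fun k _ _ => (hm k).le)
  obtain ⟨w₀, h0, d0⟩ := PlausAux.start z m hm hm1 hz1 wh hwh0 hwh hwhm (ε / 2) (by positivity)
  let F : Finset (Multiset (Fin N)) := (Finset.univ : Finset (Sym (Fin N) q)).image (fun s => s.1)
  have hF : ∀ J, J ∈ F ↔ Multiset.card J = q := by
    intro J
    simp only [F, Finset.mem_image, Finset.mem_univ, true_and]
    constructor
    · rintro ⟨s, rfl⟩; exact s.2
    · intro h; exact ⟨⟨J, h⟩, rfl⟩
  obtain ⟨w, hw, d1, hgood⟩ := PlausAux.many hN hq n hn z m w₀ hm h0 (ε / 2) (by positivity)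
    ((F ×ˢ F).filter (fun p => p.1 ≠ p.2)) (by
      rintro ⟨a, b⟩ hp
      simp only [Finset.mem_filter, Finset.mem_product, hF] at hp
      exact ⟨hp.1.1, hp.1.2, hp.2⟩)
  refine ⟨w, hw.1, ?_, hw.2.2, ?_, ?_⟩
  · intro i
    by_cases h : i = z
    · rw [h, hw.1]
    · exact (hw.2.1 i h).le
  · intro i
    have h1 := dist_triangle w w₀ wh
    have h2 := dist_le_pi_dist w wh i
    rw [Real.dist_eq] at h2
    linarith
  · intro J₁ J₂ hJ₁ hJ₂ hne b₁ hb₁ b₂ hb₂ e₁ e₂ hb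
    subst hb
    have hJ : J₁ ≠ J₂ := by rintro rfl; exact hne rfl
    exact hgood (J₁, J₂) (by simp [hF, hJ₁, hJ₂, hJ]) ⟨b₁, hb₁, e₁, e₂⟩
end

section
/- Let k ≥ 4, let (ŵ, ℓ̂) ∈ T̄^PL_k, let q > 1 be an integer and n > 1 real, and suppose there exists at least one (1/n)-plausible multiset for ŵ, i.e., a multiset J of cardinality q with elements in {1,…,k} such that ∏_{j∈J}(1 + ŵ_j·y) = 1 has a solution y ∈ [1/n, 1]. Then for every ε > 0 there exists (w̄, ℓ̄) ∈ T̄^PL_k with max_i(|w̄_i − ŵ_i| + |ℓ̄_i − ℓ̂_i|) < ε such that the w̄_i are pairwise distinct and any two distinct (1/n)-plausible multisets for w̄ have distinct associated solutions: whenever J_1 ≠ J_2 are multisets of cardinality q with elements in {1,…,k} and b_1, b_2 ∈ [1/n, 1] satisfy ∏_{j∈J_1}(1 + b_1·w̄_j) = 1 and ∏_{j∈J_2}(1 + b_2·w̄_j) = 1, then b_1 ≠ b_2. -/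
/-- Membership in the space `T̄^PL_k` of reduced piecewise linear standard-like
forcing data: lengths `ℓ_i > 0` summing to `1`, weights `w_i ≥ -1` with
`w_1 = -1`, adjacent weights distinct (indices mod `k`), and `∑ w_i ℓ_i = 0`. -/
def TPL (k : ℕ) (w l : Fin k → ℝ) : Prop :=
  (∀ i, 0 < l i) ∧ (∑ i, l i = 1) ∧ (∀ i, -1 ≤ w i) ∧
  (∀ h : 0 < k, w ⟨0, h⟩ = -1) ∧
  (∀ i : Fin k, w i ≠ w ⟨((i : ℕ) + 1) % k, Nat.mod_lt _ i.pos⟩) ∧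
  (∑ i, w i * l i = 0)


theorem aux_closure (s : Set ℝ) : ∃ F : Subfield ℝ, (∀ x ∈ s, x ∈ F) ∧
    (∀ (x : ℝ) (n : ℕ), n ≠ 0 → x ^ n ∈ F → x ∈ F) ∧
    (∀ (m : ℕ) (v : Fin m → ℝ), AlgebraicIndependent ℚ v → (∀ i, v i ∈ F) →
      (m : ℕ∞) ≤ s.encard) := by
  let F : Subfield ℝ :=
    { carrier := {x | IsAlgebraic (Algebra.adjoin ℚ s) x}
      mul_mem' := fun ha hb => IsAlgebraic.mul ha hb
      one_mem' := isAlgebraic_one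
      add_mem' := fun ha hb => IsAlgebraic.add ha hb
      zero_mem' := isAlgebraic_zero
      neg_mem' := fun ha => IsAlgebraic.neg ha
      inv_mem' := fun _ ha => IsAlgebraic.inv ha }
  have hF : ∀ x, x ∈ F ↔ IsAlgebraic (Algebra.adjoin ℚ s) x := fun x => Iff.rfl
  refine ⟨F, fun x hx => ?_, fun x n hn h => ?_, fun m v hv h => ?_⟩
  · exact (hF x).2 (isAlgebraic_algebraMap
      (⟨x, Algebra.subset_adjoin hx⟩ : Algebra.adjoin ℚ s))
  · exact (hF x).2 (IsAlgebraic.of_pow (Nat.pos_of_ne_zero hn) ((hF _).1 h))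
  · have hI : (AlgebraicIndependent.matroid ℚ ℝ).Indep (Set.range v) :=
      AlgebraicIndependent.matroid_indep_iff.2 hv.to_subtype_range
    have hsub : Set.range v ⊆ (AlgebraicIndependent.matroid ℚ ℝ).closure s := by
      rw [AlgebraicIndependent.matroid_closure_eq]
      rintro _ ⟨i, rfl⟩
      exact (hF _).1 (h i)
    have h1 : (Set.range v).encard = m := by
      rw [← Set.image_univ, hv.injective.encard_image]
      simp
    rw [← h1, ← hI.eRk_eq_encard]
    calc _ ≤ _ := (AlgebraicIndependent.matroid ℚ ℝ).eRk_mono hsub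
      _ = _ := (AlgebraicIndependent.matroid ℚ ℝ).eRk_closure_eq s
      _ ≤ _ := (AlgebraicIndependent.matroid ℚ ℝ).eRk_le_encard s

theorem aux_pick (m : ℕ) (u d : Fin m → ℝ) (hd : ∀ i, u i < d i) :
    ∃ v : Fin m → ℝ, AlgebraicIndependent ℚ v ∧ ∀ i, v i ∈ Set.Ioo (u i) (d i) := by
  induction m with
  | zero =>
    exact ⟨Fin.elim0, algebraicIndependent_empty_type_iff.2 (algebraMap ℚ ℝ).injective,
      fun i => i.elim0⟩
  | succ m ih =>
    obtain ⟨v, hv, hvi⟩ := ih (fun i => u i.succ) (fun i => d i.succ) (fun i => hd _)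
    have hc : Countable (Algebra.adjoin ℚ (Set.range v)) := by
      rw [← Cardinal.mk_le_aleph0_iff]
      refine (Algebra.cardinalMk_adjoin_le ℚ _).trans ?_
      simp
    have h2 := Algebraic.countable (Algebra.adjoin ℚ (Set.range v)) ℝ
    obtain ⟨a, ha, hb⟩ : ∃ a ∈ Set.Ioo (u 0) (d 0), a ∉
        {x : ℝ | IsAlgebraic (Algebra.adjoin ℚ (Set.range v)) x} := by
      by_contra! hcon
      exact (Cardinal.Real.Ioo_countable_iff.1 (h2.mono hcon)).not_gt (hd 0)
    have h3 := (hv.option_iff_transcendental a).2 hb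
    refine ⟨Fin.cons a v, ?_, ?_⟩
    · have h4 := h3.comp (finSuccEquiv m) (finSuccEquiv m).injective
      convert h4 using 1
      funext i
      refine Fin.cases ?_ (fun i => ?_) i <;> simp
    · intro i
      refine Fin.cases ?_ (fun i => ?_) i
      · simpa using ha
      · simpa using hvi i

theorem aux_root (F : Subfield ℝ) (hF : ∀ (x : ℝ) (n : ℕ), n ≠ 0 → x ^ n ∈ F → x ∈ F)
    (X Y f g : ℝ) (hf : f ∈ F) (hg : g ∈ F) (A B C D : ℕ)
    (h1 : X ^ A * Y ^ B * f = 1) (h2 : X ^ C * Y ^ D * g = 1) (hne : A * D < C * B) :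
    X ∈ F := by
  by_cases hX : X = 0
  · rw [hX]; exact F.zero_mem
  have hg0 : g ≠ 0 := by rintro rfl; simp at h2
  have hY : Y ^ (B * D) ≠ 0 := by
    have hB : B ≠ 0 := by rintro rfl; simp at hne
    have : Y ≠ 0 := by rintro rfl; simp [hB] at h1
    positivity
  have e1 : X ^ (A * D) * Y ^ (B * D) * f ^ D = 1 := by
    rw [pow_mul, pow_mul, ← mul_pow, ← mul_pow, h1, one_pow]
  have e2 : X ^ (C * B) * Y ^ (B * D) * g ^ B = 1 := by
    rw [mul_comm B D, pow_mul, pow_mul, ← mul_pow, ← mul_pow, h2, one_pow]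
  obtain ⟨E, hE⟩ := Nat.exists_eq_add_of_lt hne
  apply hF X (E + 1) (by omega)
  have e3 : X ^ (E + 1) * g ^ B = f ^ D := by
    have hX' : X ^ (A * D) * Y ^ (B * D) ≠ 0 := mul_ne_zero (pow_ne_zero _ hX) hY
    apply mul_left_cancel₀ hX'
    rw [e1, ← e2, hE, add_assoc, pow_add]
    ring
  have : X ^ (E + 1) = f ^ D / g ^ B := by
    rw [← e3]; field_simp
  rw [this]
  exact F.div_mem (F.pow_mem hf _) (F.pow_mem hg _)

theorem aux_root' (F : Subfield ℝ) (hF : ∀ (x : ℝ) (n : ℕ), n ≠ 0 → x ^ n ∈ F → x ∈ F)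
    (X Y f g : ℝ) (hf : f ∈ F) (hg : g ∈ F) (A B C D : ℕ)
    (h1 : X ^ A * Y ^ B * f = 1) (h2 : X ^ C * Y ^ D * g = 1) (hne : A * D ≠ C * B) :
    X ∈ F := by
  rcases lt_or_gt_of_ne hne with h | h
  · exact aux_root F hF X Y f g hf hg A B C D h1 h2 h
  · exact aux_root F hF X Y g f hg hf C D A B h2 h1 h

theorem aux_prod {k : ℕ} (J : Multiset (Fin k)) (x : Fin k → ℝ) (a c : Fin k) (hac : a ≠ c)
    (h : (J.map x).prod = 1) :
    x a ^ J.count a * x c ^ J.count c *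
      ∏ j ∈ (Finset.univ.erase a).erase c, x j ^ J.count j = 1 := by
  rw [mul_assoc, Finset.mul_prod_erase _ (fun j => x j ^ J.count j) (by simp [hac.symm]),
    Finset.mul_prod_erase _ (fun j => x j ^ J.count j) (by simp), ← h,
    Finset.prod_multiset_map_count]
  symm
  apply Finset.prod_subset (Finset.subset_univ _)
  intro j _ hj
  simp at hj
  simp [hj]

theorem aux_minor {k q : ℕ} (hq : 1 < q) (J₁ J₂ : Multiset (Fin k))
    (h1 : Multiset.card J₁ = q) (h2 : Multiset.card J₂ = q) (hne : J₁ ≠ J₂) :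
    ∃ a c, J₁.count a * J₂.count c ≠ J₂.count a * J₁.count c := by
  by_contra! hcon
  apply hne
  ext a
  have h3 : ∑ c, J₁.count a * J₂.count c = ∑ c, J₂.count a * J₁.count c :=
    Finset.sum_congr rfl fun c _ => hcon a c
  rw [← Finset.mul_sum, ← Finset.mul_sum, Multiset.sum_count_eq_card (by simp),
    Multiset.sum_count_eq_card (by simp), h1, h2] at h3
  exact Nat.eq_of_mul_eq_mul_right (by omega) h3

theorem aux_main (m q : ℕ) (hq : 1 < q) (v : Fin m → ℝ) (hv : AlgebraicIndependent ℚ v)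
    (J₁ J₂ : Multiset (Fin (m + 1)))
    (h1 : Multiset.card J₁ = q) (h2 : Multiset.card J₂ = q) (hne : J₁ ≠ J₂)
    (b : ℝ) (hb : b ≠ 0) (x : Fin (m + 1) → ℝ) (hx0 : x 0 = 1 - b)
    (hx : ∀ i : Fin m, x i.succ = 1 + b * v i)
    (e1 : (J₁.map x).prod = 1) (e2 : (J₂.map x).prod = 1) : False := by
  obtain ⟨a, c, hac⟩ := aux_minor hq J₁ J₂ h1 h2 hne
  have hac' : a ≠ c := by rintro rfl; exact hac (mul_comm _ _)
  set T : Finset (Fin (m + 1)) := (Finset.univ.erase a).erase c with hT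
  obtain ⟨F, hs, hroot, hrk⟩ := aux_closure (x '' (T : Set (Fin (m + 1))))
  have hTF : ∀ j ∈ T, x j ∈ F := fun j hj => hs _ ⟨j, hj, rfl⟩
  have hP : ∀ J : Multiset (Fin (m + 1)), ∏ j ∈ T, x j ^ J.count j ∈ F := fun J =>
    F.prod_mem fun j hj => F.pow_mem (hTF j hj) _
  have p1 := aux_prod J₁ x a c hac' e1
  have p2 := aux_prod J₂ x a c hac' e2
  have ha : x a ∈ F := aux_root' F hroot _ _ _ _ (hP J₁) (hP J₂) _ _ _ _ p1 p2 hac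
  have hc : x c ∈ F := by
    rw [mul_comm (x a ^ _)] at p1 p2
    refine aux_root' F hroot _ _ _ _ (hP J₁) (hP J₂) _ _ _ _ p1 p2 ?_
    intro h; apply hac; rw [mul_comm, ← h, mul_comm]
  have hall : ∀ j, x j ∈ F := by
    intro j
    by_cases hja : j = a
    · rw [hja]; exact ha
    by_cases hjc : j = c
    · rw [hjc]; exact hc
    exact hTF j (by simp [hT, hja, hjc])
  have hbF : b ∈ F := by
    have : b = 1 - x 0 := by rw [hx0]; ring
    rw [this]; exact F.sub_mem F.one_mem (hall 0)
  have hvF : ∀ i, v i ∈ F := by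
    intro i
    have : v i = (x i.succ - 1) / b := by rw [hx]; field_simp; ring
    rw [this]; exact F.div_mem (F.sub_mem (hall _) F.one_mem) hbF
  have h3 := (hrk m v hv hvF).trans (Set.encard_image_le _ _)
  rw [Set.encard_coe_eq_coe_finsetCard, Nat.cast_le] at h3
  rw [hT, Finset.card_erase_of_mem (by simp [hac'.symm]),
    Finset.card_erase_of_mem (by simp), Finset.card_univ, Fintype.card_fin] at h3
  have hm : m ≠ 0 := by
    rintro rfl
    exact hac' (Fin.ext (by omega))
  omega

/-- Perturbation lemma in `T̄^PL_k`, `k ≥ 4`: if `ŵ` has at least one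
`(1/n)`-plausible multiset, then `(ŵ, ℓ̂)` can be perturbed arbitrarily little
inside `T̄^PL_k` to `(w̄, ℓ̄)` with pairwise distinct weights such that any two
distinct `(1/n)`-plausible multisets for `w̄` have distinct associated
solutions in `[1/n, 1]`. -/
theorem stmt13 (k : ℕ) (hk : 4 ≤ k) (wh lh : Fin k → ℝ) (h : TPL k wh lh)
    (q : ℕ) (hq : 1 < q) (n : ℝ) (hn : 1 < n)
    (hplaus : ∃ J : Multiset (Fin k), Multiset.card J = q ∧
      ∃ y ∈ Set.Icc (1 / n) 1, (J.map (fun j => 1 + wh j * y)).prod = 1)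
    (ε : ℝ) (hε : 0 < ε) :
    ∃ wb lb : Fin k → ℝ, TPL k wb lb ∧
      (∀ i, |wb i - wh i| + |lb i - lh i| < ε) ∧
      Function.Injective wb ∧
      ∀ J₁ J₂ : Multiset (Fin k),
        Multiset.card J₁ = q → Multiset.card J₂ = q → J₁ ≠ J₂ →
        ∀ b₁ ∈ Set.Icc (1 / n) 1, ∀ b₂ ∈ Set.Icc (1 / n) 1,
          (J₁.map (fun j => 1 + b₁ * wb j)).prod = 1 →
          (J₂.map (fun j => 1 + b₂ * wb j)).prod = 1 →
          b₁ ≠ b₂ := by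
  obtain ⟨m, rfl⟩ : ∃ m, k = m + 2 := ⟨k - 2, by omega⟩
  obtain ⟨hl, hsum, hw, hw0, hadj, hwl⟩ := h
  have hw0' : wh 0 = -1 := hw0 (by omega)
  have hw1 : -1 < wh 1 := by
    refine lt_of_le_of_ne (hw 1) ?_
    have h3 := hadj 0
    rw [hw0'] at h3
    convert h3 using 2
    apply Fin.ext
    simp
  set c : ℝ := wh 1 + 1 with hc
  have hc0 : 0 < c := by linarith
  obtain ⟨δ, hδ, hδ1, hδ2⟩ : ∃ δ : ℝ, 0 < δ ∧ δ + δ / c < ε ∧ δ / c < lh 1 := by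
    have hl1 := hl 1
    have t1 : Filter.Tendsto (fun δ : ℝ => δ + δ / c) (nhdsWithin 0 (Set.Ioi 0)) (nhds 0) := by
      have : Continuous (fun δ : ℝ => δ + δ / c) := by fun_prop
      simpa using (this.tendsto 0).mono_left nhdsWithin_le_nhds
    have t2 : Filter.Tendsto (fun δ : ℝ => δ / c) (nhdsWithin 0 (Set.Ioi 0)) (nhds 0) := by
      have : Continuous (fun δ : ℝ => δ / c) := by fun_prop
      simpa using (this.tendsto 0).mono_left nhdsWithin_le_nhds
    have t3 : ∀ᶠ δ : ℝ in nhdsWithin 0 (Set.Ioi 0), 0 < δ := self_mem_nhdsWithin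
    obtain ⟨δ, hA, hB, hC⟩ := (t3.and
      ((t1.eventually_lt_const hε).and (t2.eventually_lt_const hl1))).exists
    exact ⟨δ, hA, hB, hC⟩
  obtain ⟨v, hv, hvi⟩ := aux_pick (m + 1) (fun i => wh i.succ) (fun i => wh i.succ + δ)
    (fun i => by linarith)
  let wb : Fin (m + 2) → ℝ := Fin.cons (-1) v
  have hwb0 : wb 0 = -1 := rfl
  have hwbs : ∀ i : Fin (m + 1), wb i.succ = v i := fun i => rfl
  have hlo : ∀ i, wh i ≤ wb i := by
    intro i
    refine Fin.cases ?_ (fun i => ?_) i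
    · rw [hwb0, hw0']
    · rw [hwbs]; exact (hvi i).1.le
  have hhi : ∀ i, wb i ≤ wh i + δ := by
    intro i
    refine Fin.cases ?_ (fun i => ?_) i
    · rw [hwb0, hw0']; linarith
    · rw [hwbs]; exact (hvi i).2.le
  have hinj : Function.Injective wb := by
    refine Fin.cons_injective_iff.2 ⟨?_, hv.injective⟩
    rintro ⟨i, hi⟩
    have h1 := (hvi i).1
    have h2 := hw i.succ
    linarith
  set S : ℝ := ∑ i, wb i * lh i with hS
  have hS' : S = ∑ i, (wb i - wh i) * lh i := by
    simp only [sub_mul, Finset.sum_sub_distrib, hwl, hS, sub_zero]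
  have hS0 : 0 ≤ S := by
    rw [hS']
    exact Finset.sum_nonneg fun i _ => mul_nonneg (by linarith [hlo i]) (hl i).le
  have hS1 : S ≤ δ := by
    rw [hS']
    calc _ ≤ ∑ i, δ * lh i := Finset.sum_le_sum fun i _ =>
          mul_le_mul_of_nonneg_right (by linarith [hhi i]) (hl i).le
      _ = δ := by rw [← Finset.mul_sum, hsum, mul_one]
  have hwb1 : c ≤ wb 1 + 1 := by rw [hc]; linarith [hlo 1]
  have hd0 : 0 < wb 1 + 1 := by linarith
  set t : ℝ := S / (wb 1 + 1) with ht
  have ht0 : 0 ≤ t := by positivity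
  have ht1 : t ≤ δ / c := by
    rw [ht]; gcongr
  have hts : t * (wb 1 + 1) = S := by rw [ht]; field_simp
  have h01 : (0 : Fin (m + 2)) ≠ 1 := by simp
  let lb : Fin (m + 2) → ℝ := fun i =>
    lh i + ((if i = 0 then t else 0) - (if i = 1 then t else 0))
  have hlb : ∀ i, lb i = lh i + ((if i = 0 then t else 0) - (if i = 1 then t else 0)) :=
    fun i => rfl
  refine ⟨wb, lb, ⟨?_, ?_, ?_, ?_, ?_, ?_⟩, ?_, hinj, ?_⟩
  · intro i
    have := hl i
    rw [hlb]
    by_cases h1 : i = 1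
    · subst h1
      rw [if_neg h01.symm, if_pos rfl]
      linarith
    · rw [if_neg h1]
      split_ifs <;> linarith
  · simp only [hlb, Finset.sum_add_distrib, Finset.sum_sub_distrib, hsum]
    simp
  · intro i; exact (hw i).trans (hlo i)
  · intro _; exact hwb0
  · intro i hi
    have h1 := congrArg Fin.val (hinj hi)
    simp only at h1
    have hi2 := i.isLt
    rcases Nat.lt_or_ge (i.val + 1) (m + 2) with h2 | h2
    · rw [Nat.mod_eq_of_lt h2] at h1; omega
    · have h3 : i.val + 1 = m + 2 := by omega
      rw [h3, Nat.mod_self] at h1; omega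
  · simp only [hlb, mul_add, mul_sub, Finset.sum_add_distrib, Finset.sum_sub_distrib, ← hS]
    simp only [mul_ite, mul_zero, Finset.sum_ite_eq', Finset.mem_univ, if_true, hwb0]
    rw [← hts]; ring
  · intro i
    have h1 : |wb i - wh i| ≤ δ := by
      rw [abs_le]; constructor <;> linarith [hlo i, hhi i]
    have h2 : |lb i - lh i| ≤ t := by
      rw [hlb, abs_le]
      by_cases h1 : i = 1
      · subst h1
        rw [if_neg h01.symm, if_pos rfl]
        constructor <;> linarith
      · rw [if_neg h1]
        constructor <;> split_ifs <;> linarith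
    linarith
  · intro J₁ J₂ c1 c2 hne b₁ hb₁ b₂ _ e1 e2 hbb
    subst hbb
    have hb : b₁ ≠ 0 := by
      have : 0 < 1 / n := by positivity
      exact (this.trans_le hb₁.1).ne'
    exact aux_main (m + 1) q hq v hv J₁ J₂ c1 c2 hne b₁ hb (fun j => 1 + b₁ * wb j)
      (by simp only [hwb0]; ring) (fun i => by simp only [hwbs]) e1 e2
end
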